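/- Let Y(·) solve Y(t) = y − λ∫₀ᵗ sgn(Y(s)) ds + W(t) under ℙ, and let ℙ⋆ be the reference probability measure under which Y(·) is a standard Brownian motion started at y. Then for every t ∈ [0,∞) the Radon–Nikodým derivative of ℙ with respect to ℙ⋆ on the σ-algebra 𝔉^Y(t) is dℙ/dℙ⋆|_{𝔉^Y(t)} = exp{ λ(|y| − |Y(t)| + 2L^Y(t)) − (λ²/2)t }. -/

import Mathlib

open MeasureTheory ProbabilityTheory Filter Set

noncomputable section

namespace SDEPaper

/-- The signum convention of the paper: `psgn y = 1` for `y > 0`, `= -1` for `y ≤ 0`. -/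
def psgn (y : ℝ) : ℝ := if 0 < y then 1 else -1

variable {Ω : Type*} [m : MeasurableSpace Ω]

/-- The σ-algebra generated by the process `Ξ` on the time interval `[0, t]`. -/
def natSA {E : Type*} [MeasurableSpace E] (Ξ : ℝ → Ω → E) (t : ℝ) : MeasurableSpace Ω :=
  ⨆ s ∈ Icc (0 : ℝ) t, MeasurableSpace.comap (Ξ s) inferInstance

/-- The `μ`-augmentation of a σ-algebra. -/
def augSA (μ : Measure Ω) (m' : MeasurableSpace Ω) : MeasurableSpace Ω :=
  m' ⊔ MeasurableSpace.generateFrom {A : Set Ω | μ A = 0}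

/-- `𝔉^Ξ(t)`: the `μ`-augmented σ-algebra generated by the process `Ξ` up to time `t`. -/
def natFilt {E : Type*} [MeasurableSpace E] (μ : Measure Ω) (Ξ : ℝ → Ω → E) (t : ℝ) :
    MeasurableSpace Ω := augSA μ (natSA Ξ t)

/-- Dyadic left-point Riemann sum of `H` against `X` on `[0,t]`. -/
def rsum (H X : ℝ → Ω → ℝ) (t : ℝ) (n : ℕ) (ω : Ω) : ℝ :=
  ∑ i ∈ Finset.range (2 ^ n),
    H (t * i / 2 ^ n) ω * (X (t * (i + 1) / 2 ^ n) ω - X (t * i / 2 ^ n) ω)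

/-- `I = ∫₀^· H dX`: dyadic Riemann sums converge in probability, and `I 0 = 0` a.s. -/
def IsSI (μ : Measure Ω) (H X I : ℝ → Ω → ℝ) : Prop :=
  (∀ᵐ ω ∂μ, I 0 ω = 0) ∧
  ∀ t : ℝ, 0 ≤ t → TendstoInMeasure μ (fun n => rsum H X t n) atTop (I t)

/-- `I = ∫₀^· H₁ dX₁ + ∫₀^· H₂ dX₂` in the sense of convergence in probability
of dyadic Riemann sums. -/
def IsSI2 (μ : Measure Ω) (H₁ X₁ H₂ X₂ I : ℝ → Ω → ℝ) : Prop :=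
  (∀ᵐ ω ∂μ, I 0 ω = 0) ∧
  ∀ t : ℝ, 0 ≤ t →
    TendstoInMeasure μ (fun n ω => rsum H₁ X₁ t n ω + rsum H₂ X₂ t n ω) atTop (I t)

/-- Dyadic sums of products of increments. -/
def qsum (X Y : ℝ → Ω → ℝ) (t : ℝ) (n : ℕ) (ω : Ω) : ℝ :=
  ∑ i ∈ Finset.range (2 ^ n),
    (X (t * (i + 1) / 2 ^ n) ω - X (t * i / 2 ^ n) ω) *
      (Y (t * (i + 1) / 2 ^ n) ω - Y (t * i / 2 ^ n) ω)

/-- `C = ⟨X,Y⟩`: the quadratic covariation, as a limit in probability of dyadic sums. -/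
def IsQV (μ : Measure Ω) (X Y C : ℝ → Ω → ℝ) : Prop :=
  ∀ t : ℝ, 0 ≤ t → TendstoInMeasure μ (fun n => qsum X Y t n) atTop (C t)

/-- `W` is a standard one-dimensional Brownian motion with respect to the family of
σ-algebras `F` (a filtration contained in the ambient σ-algebra). -/
structure IsBM (μ : Measure Ω) (F : ℝ → MeasurableSpace Ω) (W : ℝ → Ω → ℝ) : Prop where
  le : ∀ t : ℝ, F t ≤ m
  mono : Monotone F
  adapted : ∀ t : ℝ, 0 ≤ t → MeasurableSpace.comap (W t) inferInstance ≤ F t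
  init : ∀ᵐ ω ∂μ, W 0 ω = 0
  cont : ∀ᵐ ω ∂μ, Continuous fun t => W t ω
  law : ∀ s t : ℝ, 0 ≤ s → s ≤ t →
    μ.map (fun ω => W t ω - W s ω) = gaussianReal 0 ((t - s).toNNReal)
  indep : ∀ s t : ℝ, 0 ≤ s → s ≤ t →
    Indep (MeasurableSpace.comap (fun ω => W t ω - W s ω) inferInstance) (F s) μ

/-- `(B₁, B₂)` is a planar Brownian motion: two independent standard Brownian motions
with respect to the common filtration `F`. -/
def IsPlanarBM (μ : Measure Ω) (F : ℝ → MeasurableSpace Ω) (B₁ B₂ : ℝ → Ω → ℝ) : Prop :=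
  IsBM μ F B₁ ∧ IsBM μ F B₂ ∧
    IndepFun (fun ω => (fun t => B₁ t ω)) (fun ω => (fun t => B₂ t ω)) μ

/-- `L` is the (right) local time at the origin of the process `Y`:
`L t = lim_{ε ↓ 0} (4ε)⁻¹ ∫₀ᵗ 1{|Y(s)| < ε} ds`. -/
def IsLocalTime (μ : Measure Ω) (Y L : ℝ → Ω → ℝ) : Prop :=
  ∀ᵐ ω ∂μ, ∀ t : ℝ, 0 ≤ t →
    Tendsto (fun ε : ℝ =>
        (4 * ε)⁻¹ * ∫ s in (0:ℝ)..t, (if |Y s ω| < ε then (1:ℝ) else 0))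
      (nhdsWithin 0 (Ioi 0)) (nhds (L t ω))

/-- A continuous local martingale with respect to the filtration `F`. -/
def IsContLocMart (μ : Measure Ω) (F : Filtration ℝ m) (M : ℝ → Ω → ℝ) : Prop :=
  (∀ᵐ ω ∂μ, Continuous fun t => M t ω) ∧ StronglyAdapted F M ∧
    ∃ τ : ℕ → Ω → ℝ, (∀ n, IsStoppingTime F (fun ω => (τ n ω : WithTop ℝ))) ∧
      (∀ᵐ ω ∂μ, Tendsto (fun n => τ n ω) atTop atTop) ∧
      ∀ n, Martingale (fun t ω => M (min t (τ n ω)) ω) F μ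

/-- Orthogonality: the cross-variation `⟨M,N⟩` vanishes identically. -/
def Orthogonal (μ : Measure Ω) (M N : ℝ → Ω → ℝ) : Prop :=
  IsQV μ M N fun _ _ => 0

/-- Domination: `⟨M⟩(t) = ∫₀ᵗ q(s) d⟨N⟩(s)` for a progressively measurable
process `q` with values in `[0,c]`. -/
def Dominated (μ : Measure Ω) (F : Filtration ℝ m) (M N : ℝ → Ω → ℝ) (c : ℝ) : Prop :=
  ∃ QM QN q : ℝ → Ω → ℝ, IsQV μ M M QM ∧ IsQV μ N N QN ∧
    ProgMeasurable F q ∧ (∀ t ω, q t ω ∈ Icc (0:ℝ) c) ∧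
    ∀ᵐ ω ∂μ, ∃ ν : Measure ℝ,
      (∀ a b : ℝ, 0 ≤ a → a ≤ b → ν (Ioc a b) = ENNReal.ofReal (QN b ω - QN a ω)) ∧
      ∀ t : ℝ, 0 ≤ t → QM t ω = ∫ s in Ioc (0:ℝ) t, q s ω ∂ν

/-- The law of the two-dimensional process `(X₁, X₂)` on path space. -/
def pathLaw (μ : Measure Ω) (X₁ X₂ : ℝ → Ω → ℝ) : Measure (ℝ → ℝ × ℝ) :=
  μ.map fun ω => (fun t => (X₁ t ω, X₂ t ω))
/-- `(X₁, X₂)` solves the system (1.1)-(1.2) driven by `(B₁, B₂)`. -/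
def Solves11 (μ : Measure Ω) (F : ℝ → MeasurableSpace Ω) (g h ρ σ x₁ x₂ : ℝ)
    (B₁ B₂ X₁ X₂ : ℝ → Ω → ℝ) : Prop :=
  (∀ t : ℝ, 0 ≤ t →
    MeasurableSpace.comap (fun ω => (X₁ t ω, X₂ t ω)) inferInstance ≤ F t) ∧
  (∀ᵐ ω ∂μ, Continuous (fun t => X₁ t ω) ∧ Continuous (fun t => X₂ t ω)) ∧
  ∃ I₁ I₂ : ℝ → Ω → ℝ,
    IsSI μ (fun s ω => if X₁ s ω ≤ X₂ s ω then σ else ρ) B₁ I₁ ∧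
    IsSI μ (fun s ω => if X₁ s ω ≤ X₂ s ω then ρ else σ) B₂ I₂ ∧
    ∀ᵐ ω ∂μ, ∀ t : ℝ, 0 ≤ t →
      X₁ t ω = x₁ + (∫ s in (0:ℝ)..t, (if X₁ s ω ≤ X₂ s ω then g else -h)) + I₁ t ω ∧
      X₂ t ω = x₂ + (∫ s in (0:ℝ)..t, (if X₁ s ω ≤ X₂ s ω then -h else g)) + I₂ t ω

/-- `(X₁, X₂)` solves the system (4.7)-(4.8), driven by the single Brownian motion `W`. -/
def Solves47 (μ : Measure Ω) (F : ℝ → MeasurableSpace Ω) (g h x₁ x₂ : ℝ)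
    (W X₁ X₂ : ℝ → Ω → ℝ) : Prop :=
  (∀ t : ℝ, 0 ≤ t →
    MeasurableSpace.comap (fun ω => (X₁ t ω, X₂ t ω)) inferInstance ≤ F t) ∧
  (∀ᵐ ω ∂μ, Continuous (fun t => X₁ t ω) ∧ Continuous (fun t => X₂ t ω)) ∧
  ∃ I₁ I₂ : ℝ → Ω → ℝ,
    IsSI μ (fun s ω => if X₁ s ω ≤ X₂ s ω then (0:ℝ) else 1) W I₁ ∧
    IsSI μ (fun s ω => if X₁ s ω ≤ X₂ s ω then (-1:ℝ) else 0) W I₂ ∧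
    ∀ᵐ ω ∂μ, ∀ t : ℝ, 0 ≤ t →
      X₁ t ω = x₁ + (∫ s in (0:ℝ)..t, (if X₁ s ω ≤ X₂ s ω then g else -h)) + I₁ t ω ∧
      X₂ t ω = x₂ + (∫ s in (0:ℝ)..t, (if X₁ s ω ≤ X₂ s ω then -h else g)) + I₂ t ω

/-- `(X₁, X₂)` solves the system (4.9)-(4.10), driven by the single Brownian motion `V`. -/
def Solves49 (μ : Measure Ω) (F : ℝ → MeasurableSpace Ω) (g h x₁ x₂ : ℝ)
    (V X₁ X₂ : ℝ → Ω → ℝ) : Prop :=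
  (∀ t : ℝ, 0 ≤ t →
    MeasurableSpace.comap (fun ω => (X₁ t ω, X₂ t ω)) inferInstance ≤ F t) ∧
  (∀ᵐ ω ∂μ, Continuous (fun t => X₁ t ω) ∧ Continuous (fun t => X₂ t ω)) ∧
  ∃ I₁ I₂ : ℝ → Ω → ℝ,
    IsSI μ (fun s ω => if X₁ s ω ≤ X₂ s ω then (0:ℝ) else 1) V I₁ ∧
    IsSI μ (fun s ω => if X₁ s ω ≤ X₂ s ω then (1:ℝ) else 0) V I₂ ∧
    ∀ᵐ ω ∂μ, ∀ t : ℝ, 0 ≤ t →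
      X₁ t ω = x₁ + (∫ s in (0:ℝ)..t, (if X₁ s ω ≤ X₂ s ω then g else -h)) + I₁ t ω ∧
      X₂ t ω = x₂ + (∫ s in (0:ℝ)..t, (if X₁ s ω ≤ X₂ s ω then -h else g)) + I₂ t ω

/-- `(X₁, X₂)` solves the system (2.12)-(2.13), driven by the planar BM `(W₁, W₂)`. -/
def Solves212 (μ : Measure Ω) (F : ℝ → MeasurableSpace Ω) (g h ρ σ x₁ x₂ : ℝ)
    (W₁ W₂ X₁ X₂ : ℝ → Ω → ℝ) : Prop :=
  (∀ t : ℝ, 0 ≤ t →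
    MeasurableSpace.comap (fun ω => (X₁ t ω, X₂ t ω)) inferInstance ≤ F t) ∧
  (∀ᵐ ω ∂μ, Continuous (fun t => X₁ t ω) ∧ Continuous (fun t => X₂ t ω)) ∧
  ∃ I₁ I₂ : ℝ → Ω → ℝ,
    IsSI2 μ (fun s ω => if X₁ s ω ≤ X₂ s ω then 0 else ρ) W₁
            (fun s ω => if X₁ s ω ≤ X₂ s ω then σ else 0) W₂ I₁ ∧
    IsSI2 μ (fun s ω => if X₁ s ω ≤ X₂ s ω then -ρ else 0) W₁
            (fun s ω => if X₁ s ω ≤ X₂ s ω then 0 else -σ) W₂ I₂ ∧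
    ∀ᵐ ω ∂μ, ∀ t : ℝ, 0 ≤ t →
      X₁ t ω = x₁ + (∫ s in (0:ℝ)..t, (if X₁ s ω ≤ X₂ s ω then g else -h)) + I₁ t ω ∧
      X₂ t ω = x₂ + (∫ s in (0:ℝ)..t, (if X₁ s ω ≤ X₂ s ω then -h else g)) + I₂ t ω

/-- `(X₁, X₂)` solves the system (2.14)-(2.15), driven by the planar BM `(V₁, V₂)`. -/
def Solves214 (μ : Measure Ω) (F : ℝ → MeasurableSpace Ω) (g h ρ σ x₁ x₂ : ℝ)
    (V₁ V₂ X₁ X₂ : ℝ → Ω → ℝ) : Prop :=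
  (∀ t : ℝ, 0 ≤ t →
    MeasurableSpace.comap (fun ω => (X₁ t ω, X₂ t ω)) inferInstance ≤ F t) ∧
  (∀ᵐ ω ∂μ, Continuous (fun t => X₁ t ω) ∧ Continuous (fun t => X₂ t ω)) ∧
  ∃ I₁ I₂ : ℝ → Ω → ℝ,
    IsSI2 μ (fun s ω => if X₁ s ω ≤ X₂ s ω then 0 else ρ) V₁
            (fun s ω => if X₁ s ω ≤ X₂ s ω then σ else 0) V₂ I₁ ∧
    IsSI2 μ (fun s ω => if X₁ s ω ≤ X₂ s ω then ρ else 0) V₁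
            (fun s ω => if X₁ s ω ≤ X₂ s ω then 0 else σ) V₂ I₂ ∧
    ∀ᵐ ω ∂μ, ∀ t : ℝ, 0 ≤ t →
      X₁ t ω = x₁ + (∫ s in (0:ℝ)..t, (if X₁ s ω ≤ X₂ s ω then g else -h)) + I₁ t ω ∧
      X₂ t ω = x₂ + (∫ s in (0:ℝ)..t, (if X₁ s ω ≤ X₂ s ω then -h else g)) + I₂ t ω

/-- `(X₁, X₂)` solves the system `dX = Σ(X) dU + G(X) dt` of (eq:xSigma), where
`Σ(x) = Σ₊ 1{x₁ > x₂} + Σ₋ 1{x₁ ≤ x₂}`. -/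
def SolvesGen (μ : Measure Ω) (F : ℝ → MeasurableSpace Ω) (g h : ℝ)
    (Sp Sm : Matrix (Fin 2) (Fin 2) ℝ) (x₁ x₂ : ℝ)
    (U₁ U₂ X₁ X₂ : ℝ → Ω → ℝ) : Prop :=
  (∀ t : ℝ, 0 ≤ t →
    MeasurableSpace.comap (fun ω => (X₁ t ω, X₂ t ω)) inferInstance ≤ F t) ∧
  (∀ᵐ ω ∂μ, Continuous (fun t => X₁ t ω) ∧ Continuous (fun t => X₂ t ω)) ∧
  ∃ I₁ I₂ : ℝ → Ω → ℝ,
    IsSI2 μ (fun s ω => if X₁ s ω ≤ X₂ s ω then Sm 0 0 else Sp 0 0) U₁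
            (fun s ω => if X₁ s ω ≤ X₂ s ω then Sm 0 1 else Sp 0 1) U₂ I₁ ∧
    IsSI2 μ (fun s ω => if X₁ s ω ≤ X₂ s ω then Sm 1 0 else Sp 1 0) U₁
            (fun s ω => if X₁ s ω ≤ X₂ s ω then Sm 1 1 else Sp 1 1) U₂ I₂ ∧
    ∀ᵐ ω ∂μ, ∀ t : ℝ, 0 ≤ t →
      X₁ t ω = x₁ + (∫ s in (0:ℝ)..t, (if X₁ s ω ≤ X₂ s ω then g else -h)) + I₁ t ω ∧
      X₂ t ω = x₂ + (∫ s in (0:ℝ)..t, (if X₁ s ω ≤ X₂ s ω then -h else g)) + I₂ t ω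

/-!
Fix times `s_j ∈ [0, t]` and frequencies `θ_j`. Under `ℙ` the discretised exponential martingale
`exp(∑ (λ f'(Y) + iθ) ΔW - ½ ∑ (λ f'(Y) + iθ)² Δr)` has expectation `1` for every bounded `f'`. Take
for `f` a `C²` mollification of `|·|` at scale `ε`. A discrete Itô formula, valid along a
subsequence of the grids, turns `∑ f'(Y) ΔW` into
`f(Y(t)) - f(y) - ½ ∫ f''(Y) dr + λ ∫ f'(Y) sgn(Y) dr`, and as `ε ↓ 0` this tends to
`|Y(t)| - |y| - 2 L(t) + λ t`. Both limits pass under the expectation because the martingales are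
bounded in `L²`. Hence the characters `exp(i ∑ θ_j (Y(s_j) - y))` have under
`exp(-(λ(|y| - |Y(t)| + 2 L(t)) - ½ λ² t)) dℙ` the expectations they have for Brownian motion, so
this measure agrees with `ℙ⋆` on the σ-algebra generated by `Y` up to time `t`; it remains to invert
the density, which is measurable for that σ-algebra up to null sets.
-/

lemma abs_psgn (x : ℝ) : |psgn x| = 1 := by
  unfold psgn; split_ifs <;> simp

lemma psgn_mul_self (x : ℝ) : psgn x * psgn x = 1 := by
  rw [← abs_mul_abs_self, abs_psgn, one_mul]

lemma measurable_psgn : Measurable psgn :=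
  Measurable.ite measurableSet_Ioi measurable_const measurable_const

/-! ### A mollified absolute value -/

section SmoothAbs

/-- The symmetric second difference quotient of `f` with step `ε`. -/
def secondDiff (ε : ℝ) (f : ℝ → ℝ) (x : ℝ) : ℝ := (f (x + ε) + f (x - ε) - 2 * f x) / ε ^ 2

/-- A `C²` approximation of `|·|` as `ε ↓ 0`. It is the convolution of `|·|` with the tent function
of width `ε`; since `|x|³ / 6` is a second primitive of `|x|`, the convolution is a second
difference. -/
def smoothAbs (ε : ℝ) : ℝ → ℝ := secondDiff ε fun x => |x| ^ 3 / 6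

/-- The derivative of `smoothAbs ε`, an approximation of the signum. -/
def smoothAbsDeriv (ε : ℝ) : ℝ → ℝ := secondDiff ε fun x => x * |x| / 2

/-- The second derivative of `smoothAbs ε`, an approximation of twice the Dirac mass at `0`. -/
def smoothAbsDeriv₂ (ε : ℝ) : ℝ → ℝ := secondDiff ε fun x => |x|

lemma continuous_secondDiff (ε : ℝ) {f : ℝ → ℝ} (hf : Continuous f) :
    Continuous (secondDiff ε f) := by
  unfold secondDiff; fun_prop

lemma abs_secondDiff_le (ε : ℝ) {f : ℝ → ℝ} {C : ℝ} (hf : ∀ x, |f x| ≤ C) (x : ℝ) :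
    |secondDiff ε f x| ≤ 4 * C / ε ^ 2 := by
  have hnum : |f (x + ε) + f (x - ε) - 2 * f x| ≤ 4 * C := by
    have h₁ := abs_le.1 (hf (x + ε))
    have h₂ := abs_le.1 (hf (x - ε))
    have h₃ := abs_le.1 (hf x)
    exact abs_le.2 ⟨by linarith, by linarith⟩
  rw [secondDiff, abs_div, abs_of_nonneg (sq_nonneg ε)]
  gcongr

lemma continuous_smoothAbs (ε : ℝ) : Continuous (smoothAbs ε) :=
  continuous_secondDiff ε (by fun_prop)

lemma continuous_smoothAbsDeriv (ε : ℝ) : Continuous (smoothAbsDeriv ε) :=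
  continuous_secondDiff ε (by fun_prop)

lemma continuous_smoothAbsDeriv₂ (ε : ℝ) : Continuous (smoothAbsDeriv₂ ε) :=
  continuous_secondDiff ε (by fun_prop)

lemma abs_cube_taylor_of_nonneg {x : ℝ} (hx : 0 ≤ x) (d : ℝ) :
    |(|x + d| ^ 3 / 6 - |x| ^ 3 / 6 - x * |x| / 2 * d - |x| / 2 * d ^ 2)| ≤ |d| ^ 3 / 6 := by
  rw [abs_of_nonneg hx]
  rcases le_or_gt 0 (x + d) with hxd | hxd
  · have hcube : (x + d) ^ 3 / 6 - x ^ 3 / 6 - x * x / 2 * d - x / 2 * d ^ 2 = d ^ 3 / 6 := by ring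
    rw [abs_of_nonneg hxd, hcube, abs_div, abs_pow, abs_of_pos (by norm_num : (0 : ℝ) < 6)]
  · have hd : d < 0 := by linarith
    have hle : (-(x + d)) ^ 3 ≤ (-d) ^ 3 := pow_le_pow_left₀ (by linarith) (by linarith) 3
    have hnonneg : 0 ≤ (-(x + d)) ^ 3 := pow_nonneg (by linarith) 3
    rw [abs_of_neg hxd, abs_of_neg hd, abs_le]
    constructor <;> nlinarith

lemma abs_cube_taylor (x d : ℝ) :
    |(|x + d| ^ 3 / 6 - |x| ^ 3 / 6 - x * |x| / 2 * d - |x| / 2 * d ^ 2)| ≤ |d| ^ 3 / 6 := by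
  rcases le_total 0 x with hx | hx
  · exact abs_cube_taylor_of_nonneg hx d
  · have h := abs_cube_taylor_of_nonneg (neg_nonneg.2 hx) (-d)
    rw [abs_neg, abs_neg, ← neg_add, abs_neg] at h
    convert h using 2
    ring

lemma smoothAbs_taylor (ε x d : ℝ) :
    |smoothAbs ε (x + d) - smoothAbs ε x - smoothAbsDeriv ε x * d -
      smoothAbsDeriv₂ ε x / 2 * d ^ 2| ≤ |d| ^ 3 / ε ^ 2 := by
  have hremainder : smoothAbs ε (x + d) - smoothAbs ε x - smoothAbsDeriv ε x * d -
      smoothAbsDeriv₂ ε x / 2 * d ^ 2 = secondDiff ε (fun x =>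
        |x + d| ^ 3 / 6 - |x| ^ 3 / 6 - x * |x| / 2 * d - |x| / 2 * d ^ 2) x := by
    simp only [smoothAbs, smoothAbsDeriv, smoothAbsDeriv₂, secondDiff, add_right_comm x ε d,
      show x - ε + d = x + d - ε by ring]
    ring
  calc _ ≤ 4 * (|d| ^ 3 / 6) / ε ^ 2 := hremainder ▸ abs_secondDiff_le ε (abs_cube_taylor · d) x
    _ ≤ |d| ^ 3 / ε ^ 2 := by gcongr; linarith [pow_nonneg (abs_nonneg d) 3]

variable {ε : ℝ}

lemma smoothAbsDeriv₂_eq (hε : 0 < ε) (x : ℝ) :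
    smoothAbsDeriv₂ ε x = 2 / ε ^ 2 * max (ε - |x|) 0 := by
  have hnum : |x + ε| + |x - ε| - 2 * |x| = 2 * max (ε - |x|) 0 := by
    rcases abs_cases (x + ε) with h₁ | h₁ <;> rcases abs_cases (x - ε) with h₂ | h₂ <;>
      rcases abs_cases x with h₃ | h₃ <;> rcases max_cases (ε - |x|) 0 with h₄ | h₄ <;> linarith
  rw [smoothAbsDeriv₂, secondDiff, hnum]
  ring

lemma smoothAbsDeriv₂_eq_integral (hε : 0 < ε) (x : ℝ) :
    smoothAbsDeriv₂ ε x = 2 / ε ^ 2 * ∫ r in Ioc 0 ε, if |x| < r then (1 : ℝ) else 0 := by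
  have hind : (fun r : ℝ => if |x| < r then (1 : ℝ) else 0) = (Ioi |x|).indicator 1 := by
    ext r; simp [indicator_apply]
  have hset : Ioi |x| ∩ Ioc 0 ε = Ioc |x| ε := by
    rw [← Ioi_inter_Iic, ← inter_assoc, Ioi_inter_Ioi, sup_of_le_left (abs_nonneg x),
      Ioi_inter_Iic]
  rw [smoothAbsDeriv₂_eq hε, hind, setIntegral_indicator measurableSet_Ioi, inter_comm, hset]
  simp [Real.volume_real_Ioc]

lemma abs_smoothAbsDeriv₂_le (hε : 0 < ε) (x : ℝ) : |smoothAbsDeriv₂ ε x| ≤ 2 / ε := by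
  rw [smoothAbsDeriv₂_eq hε, abs_of_nonneg (by positivity)]
  calc _ ≤ 2 / ε ^ 2 * ε := by gcongr; exact max_le (by linarith [abs_nonneg x]) hε.le
    _ = 2 / ε := by field_simp

lemma smoothAbsDeriv_eq_psgn (hε : 0 < ε) {x : ℝ} (hx : ε ≤ |x|) : smoothAbsDeriv ε x = psgn x := by
  rw [smoothAbsDeriv, secondDiff, psgn, div_eq_iff (pow_pos hε 2).ne']
  rcases abs_cases x with ⟨habs, hx₀⟩ | ⟨habs, hx₀⟩ <;> rw [habs] at hx ⊢
  · rw [if_pos (by linarith), abs_of_nonneg (by linarith : 0 ≤ x + ε),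
      abs_of_nonneg (by linarith : 0 ≤ x - ε)]
    ring
  · rw [if_neg (by linarith), abs_of_nonpos (by linarith : x + ε ≤ 0),
      abs_of_nonpos (by linarith : x - ε ≤ 0)]
    ring

lemma abs_smoothAbsDeriv_le_one (hε : 0 < ε) (x : ℝ) : |smoothAbsDeriv ε x| ≤ 1 := by
  rcases le_or_gt ε |x| with hx | hx
  · rw [smoothAbsDeriv_eq_psgn hε hx, abs_psgn]
  · obtain ⟨hlow, hupp⟩ := abs_lt.1 hx
    rw [smoothAbsDeriv, secondDiff, abs_div, abs_of_pos (pow_pos hε 2), div_le_one (pow_pos hε 2),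
      abs_of_nonneg (by linarith : 0 ≤ x + ε), abs_of_nonpos (by linarith : x - ε ≤ 0)]
    rcases abs_cases x with ⟨habs, _⟩ | ⟨habs, _⟩ <;> rw [habs, abs_le] <;> constructor <;>
      nlinarith [sq_nonneg (x - ε), sq_nonneg (x + ε)]

lemma abs_smoothAbsDeriv_sub_psgn_le (hε : 0 < ε) (x : ℝ) :
    |smoothAbsDeriv ε x - psgn x| ≤ 2 * if |x| < ε then (1 : ℝ) else 0 := by
  split_ifs with hx
  · linarith [abs_sub (smoothAbsDeriv ε x) (psgn x), abs_smoothAbsDeriv_le_one hε x, abs_psgn x]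
  · simp [smoothAbsDeriv_eq_psgn hε (not_lt.1 hx)]

lemma abs_smoothAbs_sub_abs_le (hε : 0 < ε) (x : ℝ) : |(smoothAbs ε x - |x|)| ≤ ε := by
  have hadd := abs_le.1 (abs_cube_taylor x ε)
  have hsub := abs_le.1 (abs_cube_taylor x (-ε))
  rw [abs_neg, ← sub_eq_add_neg] at hsub
  rw [abs_of_pos hε] at hadd hsub
  have hε₃ : 0 < ε ^ 3 := pow_pos hε 3
  rw [smoothAbs, secondDiff, div_sub' (pow_pos hε 2).ne', abs_div, abs_of_pos (pow_pos hε 2),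
    div_le_iff₀ (pow_pos hε 2), abs_le]
  constructor <;> nlinarith

end SmoothAbs

/-! ### Riemann sums along uniform grids -/

section RiemannSums

/-- The `i`-th point of the subdivision of `[0, t]` into `n` intervals of equal length. -/
def grid (t : ℝ) (n i : ℕ) : ℝ := i * (t / n)

/-- The index of the last point of `grid t n` not exceeding `s`. -/
def gridIndex (t : ℝ) (n : ℕ) (s : ℝ) : ℕ := ⌊s / (t / n)⌋₊

variable {t s : ℝ} {n : ℕ}

@[simp] lemma grid_zero (t : ℝ) (n : ℕ) : grid t n 0 = 0 := by simp [grid]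

lemma grid_succ_sub (t : ℝ) (n i : ℕ) : grid t n (i + 1) - grid t n i = t / n := by
  simp only [grid, Nat.cast_add, Nat.cast_one]; ring

lemma grid_self (t : ℝ) (hn : n ≠ 0) : grid t n n = t := by
  rw [grid, mul_div_cancel₀ _ (Nat.cast_ne_zero.2 hn)]

lemma tendsto_grid_self (t : ℝ) : Tendsto (fun n => grid t n n) atTop (nhds t) :=
  tendsto_const_nhds.congr' <| (eventually_ne_atTop 0).mono fun _ hn => (grid_self t hn).symm

lemma monotone_grid (ht : 0 ≤ t) (n : ℕ) : Monotone (grid t n) := fun _ _ hij => by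
  unfold grid; gcongr

lemma grid_nonneg (ht : 0 ≤ t) (n i : ℕ) : 0 ≤ grid t n i := by
  unfold grid; positivity

lemma grid_le (ht : 0 ≤ t) {i : ℕ} (hi : i ≤ n) : grid t n i ≤ t := by
  rcases eq_or_ne n 0 with rfl | hn
  · simpa [grid] using ht
  · exact (monotone_grid ht n hi).trans_eq (grid_self t hn)

lemma gridIndex_le (hs : s ∈ Icc 0 t) (n : ℕ) : gridIndex t n s ≤ n := by
  rcases eq_or_ne n 0 with rfl | hn
  · simp [gridIndex]
  · exact Nat.floor_le_of_le <| div_le_of_le_mul₀ (div_nonneg (hs.1.trans hs.2) n.cast_nonneg)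
      n.cast_nonneg (hs.2.trans_eq (grid_self t hn).symm)

lemma tendsto_grid_gridIndex (hs : s ∈ Icc 0 t) :
    Tendsto (fun n => grid t n (gridIndex t n s)) atTop (nhds s) := by
  have ht : 0 ≤ t := hs.1.trans hs.2
  rcases ht.eq_or_lt with rfl | ht
  · simp [grid, le_antisymm hs.2 hs.1]
  have hmesh : Tendsto (fun n : ℕ => t / n) atTop (nhds 0) :=
    tendsto_const_div_atTop_nhds_zero_nat t
  refine tendsto_of_tendsto_of_tendsto_of_le_of_le' (by simpa using hmesh.const_sub s)
    tendsto_const_nhds ?_ ?_ <;> filter_upwards [eventually_gt_atTop 0] with n hn <;>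
    have hpos : 0 < t / n := by positivity
  · have := (Nat.sub_one_lt_floor (s / (t / n))).le
    calc s - t / n = (s / (t / n) - 1) * (t / n) := by field_simp
      _ ≤ grid t n (gridIndex t n s) := by unfold grid gridIndex; gcongr
  · exact (le_div_iff₀ hpos).1 (Nat.floor_le (div_nonneg hs.1 hpos.le))

variable {g k : ℝ → ℝ}

lemma abs_sum_mul_integral_sub_integral_mul_le
    (hgk : ∀ a b, IntervalIntegrable (fun r => g r * k r) volume a b)
    (hk : ∀ a b, IntervalIntegrable k volume a b) {τ : ℕ → ℝ} (hτ : Monotone τ) {K : ℕ} {δ : ℝ}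
    (hδ : ∀ i < K, ∀ r ∈ Ioc (τ i) (τ (i + 1)), |g (τ i) - g r| ≤ δ) :
    |∑ i ∈ Finset.range K, g (τ i) * (∫ r in (τ i)..(τ (i + 1)), k r) -
      ∫ r in (τ 0)..(τ K), g r * k r| ≤ δ * ∫ r in (τ 0)..(τ K), |k r| := by
  have hterm : ∀ i ∈ Finset.range K, |g (τ i) * (∫ r in (τ i)..(τ (i + 1)), k r) -
      ∫ r in (τ i)..(τ (i + 1)), g r * k r| ≤ ∫ r in (τ i)..(τ (i + 1)), δ * |k r| := by
    intro i hi
    rw [← intervalIntegral.integral_const_mul,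
      ← intervalIntegral.integral_sub ((hk _ _).const_mul _) (hgk _ _),
      ← Real.norm_eq_abs]
    refine intervalIntegral.norm_integral_le_of_norm_le (hτ i.le_succ)
      (Eventually.of_forall fun r hr => ?_) ((hk _ _).abs.const_mul δ)
    rw [← sub_mul, norm_mul]
    exact mul_le_mul_of_nonneg_right (hδ i (Finset.mem_range.1 hi) r hr) (abs_nonneg _)
  rw [← intervalIntegral.integral_const_mul,
    ← intervalIntegral.sum_integral_adjacent_intervals fun i _ => hgk (τ i) (τ (i + 1)),
    ← intervalIntegral.sum_integral_adjacent_intervals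
      fun i _ => (hk (τ i) (τ (i + 1))).abs.const_mul δ, ← Finset.sum_sub_distrib]
  exact (Finset.abs_sum_le_sum_abs _ _).trans (Finset.sum_le_sum hterm)

lemma tendsto_sum_grid_mul_integral (hg : Continuous g)
    (hk : ∀ a b, IntervalIntegrable k volume a b) (ht : 0 ≤ t) {K : ℕ → ℕ} (hK : ∀ n, K n ≤ n)
    (hKs : Tendsto (fun n => grid t n (K n)) atTop (nhds s)) :
    Tendsto (fun n => ∑ i ∈ Finset.range (K n),
        g (grid t n i) * ∫ r in (grid t n i)..(grid t n (i + 1)), k r)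
      atTop (nhds (∫ r in (0 : ℝ)..s, g r * k r)) := by
  have hgk : ∀ a b, IntervalIntegrable (fun r => g r * k r) volume a b :=
    fun a b => (hk a b).continuousOn_mul hg.continuousOn
  have hprim : Tendsto (fun n => ∫ r in (0 : ℝ)..(grid t n (K n)), g r * k r)
      atTop (nhds (∫ r in (0 : ℝ)..s, g r * k r)) :=
    ((intervalIntegral.continuous_primitive hgk 0).tendsto s).comp hKs
  suffices hdiff : Tendsto (fun n => ∑ i ∈ Finset.range (K n),
        g (grid t n i) * (∫ r in (grid t n i)..(grid t n (i + 1)), k r) -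
      ∫ r in (0 : ℝ)..(grid t n (K n)), g r * k r) atTop (nhds 0) by
    simpa using hdiff.add hprim
  rw [Metric.tendsto_nhds]
  intro ε hε
  set C := ∫ r in (0 : ℝ)..t, |k r|
  have hC : 0 ≤ C := intervalIntegral.integral_nonneg ht fun r _ => abs_nonneg _
  obtain ⟨η, hη, hunif⟩ := Metric.uniformContinuousOn_iff.1
    (isCompact_Icc.uniformContinuousOn_of_continuous (hg.continuousOn (s := Icc 0 t)))
    (ε / (C + 1)) (by positivity)
  filter_upwards [(tendsto_const_div_atTop_nhds_zero_nat t).eventually_lt_const hη] with n hn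
  have hosc : ∀ i < K n, ∀ r ∈ Ioc (grid t n i) (grid t n (i + 1)),
      |g (grid t n i) - g r| ≤ ε / (C + 1) := by
    intro i hi r hr
    have hr_le : r ≤ t := hr.2.trans (grid_le ht (hi.trans_le (hK n)))
    have hi₀ := grid_nonneg ht n i
    refine (hunif _ ⟨hi₀, hr.1.le.trans hr_le⟩ _ ⟨hi₀.trans hr.1.le, hr_le⟩ ?_).le
    rw [Real.dist_eq, abs_of_neg (sub_neg.2 hr.1)]
    linarith [hr.2, grid_succ_sub t n i]
  have hbound := abs_sum_mul_integral_sub_integral_mul_le hgk hk (monotone_grid ht n) hosc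
  rw [grid_zero] at hbound
  rw [dist_zero_right, Real.norm_eq_abs]
  calc _ ≤ ε / (C + 1) * ∫ r in (0 : ℝ)..(grid t n (K n)), |k r| := hbound
    _ ≤ ε / (C + 1) * C := by
      gcongr
      exact intervalIntegral.integral_mono_interval le_rfl (grid_nonneg ht n _) (grid_le ht (hK n))
        (Eventually.of_forall fun r => abs_nonneg _) (hk _ _).abs
    _ < ε := by rw [div_mul_eq_mul_div, div_lt_iff₀ (by positivity)]; nlinarith

lemma tendsto_sum_grid_mul_sub (hg : Continuous g) (ht : 0 ≤ t) {K : ℕ → ℕ} (hK : ∀ n, K n ≤ n)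
    (hKs : Tendsto (fun n => grid t n (K n)) atTop (nhds s)) :
    Tendsto (fun n => ∑ i ∈ Finset.range (K n), g (grid t n i) * (t / n)) atTop
      (nhds (∫ r in (0 : ℝ)..s, g r)) := by
  simpa [grid_succ_sub] using tendsto_sum_grid_mul_integral hg (k := fun _ => 1)
    (fun _ _ => intervalIntegrable_const) ht hK hKs

end RiemannSums

/-! ### Occupation times and the local time of a path -/

section LocalTime

/-- The time spent by the path `Y` in `(-ε, ε)` up to time `t`. -/
def occupationTime (Y : ℝ → ℝ) (t ε : ℝ) : ℝ :=
  ∫ s in (0 : ℝ)..t, if |Y s| < ε then (1 : ℝ) else 0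

/-- The path `Y` has local time `L` at the origin at time `t`, with the normalisation `(4ε)⁻¹` of
`IsLocalTime`. -/
def HasLocalTimeAt (Y : ℝ → ℝ) (t L : ℝ) : Prop :=
  Tendsto (fun ε => (4 * ε)⁻¹ * occupationTime Y t ε) (nhdsWithin 0 (Ioi 0)) (nhds L)

lemma intervalIntegrable_of_abs_le {f : ℝ → ℝ} (hf : Measurable f) {C : ℝ} (hC : ∀ x, |f x| ≤ C)
    (a b : ℝ) : IntervalIntegrable f volume a b :=
  intervalIntegrable_iff.2 <| Measure.integrableOn_of_bounded (M := C) (by simp)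
    hf.aestronglyMeasurable (Eventually.of_forall hC)

lemma tendsto_integral_div_sq_of_tendsto_div {f : ℝ → ℝ} {c : ℝ}
    (hf : ∀ ε, IntervalIntegrable f volume 0 ε)
    (hlim : Tendsto (fun r => f r / r) (nhdsWithin 0 (Ioi 0)) (nhds c)) :
    Tendsto (fun ε => (∫ r in (0 : ℝ)..ε, f r) / ε ^ 2) (nhdsWithin 0 (Ioi 0)) (nhds (c / 2)) := by
  rw [Metric.tendsto_nhdsWithin_nhds] at hlim ⊢
  intro η hη
  obtain ⟨δ, hδ, hclose⟩ := hlim η hη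
  refine ⟨δ, hδ, fun {ε} (hε : 0 < ε) hεδ => ?_⟩
  rw [dist_zero_right, Real.norm_of_nonneg hε.le] at hεδ
  have hlinear : ∀ b : ℝ, ∫ r in (0 : ℝ)..ε, b * r = b / 2 * ε ^ 2 := fun b => by
    rw [intervalIntegral.integral_const_mul, integral_id]; ring
  have hlinear_int : ∀ b : ℝ, IntervalIntegrable (fun r => b * r) volume 0 ε :=
    fun b => (continuous_const_mul b).intervalIntegrable 0 ε
  have hbound : |∫ r in (0 : ℝ)..ε, (f r - c * r)| ≤ ∫ r in (0 : ℝ)..ε, η * r := by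
    rw [← Real.norm_eq_abs]
    refine intervalIntegral.norm_integral_le_of_norm_le hε.le
      (Eventually.of_forall fun r hr => ?_) (hlinear_int η)
    have hr_close := hclose (x := r) hr.1
      (by rw [dist_zero_right, Real.norm_of_nonneg hr.1.le]; exact hr.2.trans_lt hεδ)
    rw [Real.norm_eq_abs, show f r - c * r = (f r / r - c) * r by
      rw [sub_mul, div_mul_cancel₀ _ hr.1.ne'], abs_mul, abs_of_pos hr.1]
    exact mul_le_mul_of_nonneg_right hr_close.le hr.1.le
  rw [intervalIntegral.integral_sub (hf ε) (hlinear_int c), hlinear, hlinear] at hbound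
  rw [Real.dist_eq, div_sub' (pow_pos hε 2).ne', abs_div, abs_of_pos (pow_pos hε 2),
    div_lt_iff₀ (pow_pos hε 2), mul_comm (ε ^ 2)]
  nlinarith [pow_pos hε 2]

variable {Y : ℝ → ℝ} {t L ε : ℝ}

lemma intervalIntegrable_indicator_abs_lt (hY : Continuous Y) (ε a b : ℝ) :
    IntervalIntegrable (fun s => if |Y s| < ε then (1 : ℝ) else 0) volume a b :=
  intervalIntegrable_of_abs_le (C := 1)
    (Measurable.ite (measurableSet_lt (by fun_prop) measurable_const) measurable_const
      measurable_const) (fun s => by split_ifs <;> simp) a b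

lemma monotone_occupationTime (hY : Continuous Y) (ht : 0 ≤ t) :
    Monotone (occupationTime Y t) := fun ε δ hεδ =>
  intervalIntegral.integral_mono_on ht (intervalIntegrable_indicator_abs_lt hY ε 0 t)
    (intervalIntegrable_indicator_abs_lt hY δ 0 t) fun s _ => by
      split_ifs <;> linarith

lemma integral_smoothAbsDeriv₂_comp (hY : Continuous Y) (ht : 0 ≤ t) (hε : 0 < ε) :
    ∫ s in (0 : ℝ)..t, smoothAbsDeriv₂ ε (Y s) =
      2 / ε ^ 2 * ∫ r in (0 : ℝ)..ε, occupationTime Y t r := by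
  have hint : Integrable (fun z : ℝ × ℝ => if |Y z.1| < z.2 then (1 : ℝ) else 0)
      ((volume.restrict (Ioc 0 t)).prod (volume.restrict (Ioc 0 ε))) :=
    Integrable.of_bound (C := 1) (Measurable.ite (measurableSet_lt (by fun_prop) (by fun_prop))
      measurable_const measurable_const).aestronglyMeasurable
      (Eventually.of_forall fun z => by split_ifs <;> simp)
  simp only [smoothAbsDeriv₂_eq_integral hε, occupationTime, intervalIntegral.integral_of_le ht,
    intervalIntegral.integral_of_le hε.le]
  rw [integral_const_mul, integral_integral_swap hint]

namespace HasLocalTimeAt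

lemma tendsto_occupationTime (hL : HasLocalTimeAt Y t L) :
    Tendsto (occupationTime Y t) (nhdsWithin 0 (Ioi 0)) (nhds 0) := by
  have hzero : Tendsto (fun ε : ℝ => 4 * ε) (nhdsWithin 0 (Ioi 0)) (nhds 0) :=
    ((continuous_const_mul 4).tendsto' 0 0 (mul_zero 4)).mono_left nhdsWithin_le_nhds
  refine (zero_mul L ▸ hzero.mul hL).congr' ?_
  filter_upwards [self_mem_nhdsWithin] with ε (hε : 0 < ε)
  rw [mul_inv_cancel_left₀ (by positivity)]

lemma tendsto_integral_comp (hL : HasLocalTimeAt Y t L) (hY : Continuous Y) (ht : 0 ≤ t)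
    {G : ℝ → ℝ → ℝ} {G₀ : ℝ → ℝ} {B C : ℝ} (hG : ∀ ε, Measurable (G ε)) (hG₀ : Measurable G₀)
    (hB : ∀ x, |G₀ x| ≤ B)
    (hC : ∀ ε, 0 < ε → ∀ x, |G ε x - G₀ x| ≤ C * if |x| < ε then (1 : ℝ) else 0) :
    Tendsto (fun ε => ∫ s in (0 : ℝ)..t, G ε (Y s)) (nhdsWithin 0 (Ioi 0))
      (nhds (∫ s in (0 : ℝ)..t, G₀ (Y s))) := by
  rw [tendsto_iff_norm_sub_tendsto_zero]
  refine squeeze_zero' (Eventually.of_forall fun _ => norm_nonneg _) ?_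
    (mul_zero C ▸ hL.tendsto_occupationTime.const_mul C)
  filter_upwards [self_mem_nhdsWithin] with ε hε
  have hocc := (intervalIntegrable_indicator_abs_lt hY ε 0 t).const_mul C
  have hG₀int : IntervalIntegrable (fun s => G₀ (Y s)) volume 0 t :=
    intervalIntegrable_of_abs_le (hG₀.comp hY.measurable) (fun s => hB (Y s)) 0 t
  have hdiff : IntervalIntegrable (fun s => G ε (Y s) - G₀ (Y s)) volume 0 t :=
    hocc.mono_fun' (((hG ε).comp hY.measurable).sub (hG₀.comp hY.measurable)).aestronglyMeasurable
      (Eventually.of_forall fun s => hC ε hε (Y s))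
  have hGint : IntervalIntegrable (fun s => G ε (Y s)) volume 0 t := by
    simpa using hdiff.add hG₀int
  rw [← intervalIntegral.integral_sub hGint hG₀int, occupationTime,
    ← intervalIntegral.integral_const_mul]
  exact intervalIntegral.norm_integral_le_of_norm_le ht
    (Eventually.of_forall fun s _ => hC ε hε (Y s)) hocc

lemma tendsto_integral_smoothAbsDeriv₂ (hL : HasLocalTimeAt Y t L) (hY : Continuous Y)
    (ht : 0 ≤ t) :
    Tendsto (fun ε => ∫ s in (0 : ℝ)..t, smoothAbsDeriv₂ ε (Y s)) (nhdsWithin 0 (Ioi 0))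
      (nhds (4 * L)) := by
  have hratio : Tendsto (fun r => occupationTime Y t r / r) (nhdsWithin 0 (Ioi 0))
      (nhds (4 * L)) := by
    refine (hL.const_mul 4).congr fun r => ?_
    rw [mul_inv, mul_assoc, mul_inv_cancel_left₀ four_ne_zero, inv_mul_eq_div]
  have hmean := (tendsto_integral_div_sq_of_tendsto_div
    (fun ε => (monotone_occupationTime hY ht).intervalIntegrable) hratio).const_mul 2
  rw [mul_div_cancel₀ _ two_ne_zero] at hmean
  refine hmean.congr' ?_
  filter_upwards [self_mem_nhdsWithin] with ε hε
  rw [integral_smoothAbsDeriv₂_comp hY ht hε]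
  ring

end HasLocalTimeAt

end LocalTime

/-! ### Gaussian exponentials -/

section GaussianExp

lemma integral_cexp_mul_sub_gaussianReal (z : ℂ) (v : NNReal) :
    ∫ x : ℝ, Complex.exp (z * x - z ^ 2 * v / 2) ∂gaussianReal 0 v = 1 := by
  have hmgf : ∫ x : ℝ, Complex.exp (z * x) ∂gaussianReal 0 v = Complex.exp (v * z ^ 2 / 2) := by
    simpa [complexMGF] using complexMGF_id_gaussianReal (μ := 0) (v := v) z
  simp_rw [Complex.exp_sub]
  rw [integral_div, hmgf, mul_comm (v : ℂ), div_self (Complex.exp_ne_zero _)]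

lemma norm_cexp_mul_sub_le {z : ℂ} {K : ℝ} (hz : ‖z‖ ≤ K) (x : ℝ) (v : NNReal) :
    ‖Complex.exp (z * x - z ^ 2 * v / 2)‖ ≤
      (Real.exp (K * x) + Real.exp (-K * x)) * Real.exp (K ^ 2 * v / 2) := by
  have hre : (z * x - z ^ 2 * v / 2).re ≤ K * |x| + K ^ 2 * v / 2 := by
    have hlin : (z * x).re ≤ K * |x| := calc
      (z * x).re ≤ ‖z * x‖ := Complex.re_le_norm _
      _ ≤ K * |x| := by rw [norm_mul, Complex.norm_real, Real.norm_eq_abs]; gcongr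
    have hquad : -(z ^ 2 * v / 2).re ≤ K ^ 2 * v / 2 := calc
      -(z ^ 2 * v / 2).re ≤ ‖z ^ 2 * v / 2‖ := (neg_le_abs _).trans (Complex.abs_re_le_norm _)
      _ = ‖z‖ ^ 2 * v / 2 := by simp
      _ ≤ K ^ 2 * v / 2 := by gcongr
    rw [Complex.sub_re]
    linarith
  have habs : Real.exp (K * |x|) ≤ Real.exp (K * x) + Real.exp (-K * x) := by
    rcases abs_choice x with hx | hx <;> rw [hx]
    · exact le_add_of_nonneg_right (Real.exp_pos _).le
    · rw [mul_neg, ← neg_mul]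
      exact le_add_of_nonneg_left (Real.exp_pos _).le
  calc _ ≤ Real.exp (K * |x| + K ^ 2 * v / 2) := by rw [Complex.norm_exp]; gcongr
    _ ≤ _ := by rw [Real.exp_add]; gcongr

variable {μ : Measure Ω} {G z : Ω → ℂ} {D : Ω → ℝ} {v : NNReal} {K : ℝ}

lemma integrable_mul_cexp_of_indepFun (hG : Integrable G μ) (hz : Measurable z)
    (hD : Measurable D) (hlaw : μ.map D = gaussianReal 0 v)
    (hind : IndepFun (fun ω => (G ω, z ω)) D μ) (hK : ∀ ω, ‖z ω‖ ≤ K) :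
    Integrable (fun ω => G ω * Complex.exp (z ω * D ω - z ω ^ 2 * v / 2)) μ := by
  have hexp : ∀ c : ℝ, Integrable (fun ω => Real.exp (c * D ω)) μ := fun c =>
    Integrable.comp_measurable (g := fun x => Real.exp (c * x))
      (hlaw ▸ integrable_exp_mul_gaussianReal c) hD
  have hdom : Integrable (fun ω => ‖G ω‖ *
      ((Real.exp (K * D ω) + Real.exp (-K * D ω)) * Real.exp (K ^ 2 * v / 2))) μ :=
    (hind.comp (φ := fun p : ℂ × ℂ => ‖p.1‖) (ψ := fun x =>
      (Real.exp (K * x) + Real.exp (-K * x)) * Real.exp (K ^ 2 * v / 2))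
      (by fun_prop) (by fun_prop)).integrable_mul hG.norm
      (((hexp K).add (hexp (-K))).mul_const _)
  refine hdom.mono' (hG.1.mul (by fun_prop)) (Eventually.of_forall fun ω => ?_)
  rw [norm_mul]
  gcongr
  exact norm_cexp_mul_sub_le (hK ω) (D ω) v

lemma integral_mul_cexp_of_indepFun [IsFiniteMeasure μ] (hGm : Measurable G)
    (hG : Integrable G μ) (hz : Measurable z) (hD : Measurable D)
    (hlaw : μ.map D = gaussianReal 0 v) (hind : IndepFun (fun ω => (G ω, z ω)) D μ)
    (hK : ∀ ω, ‖z ω‖ ≤ K) :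
    ∫ ω, G ω * Complex.exp (z ω * D ω - z ω ^ 2 * v / 2) ∂μ = ∫ ω, G ω ∂μ := by
  let Φ : (ℂ × ℂ) × ℝ → ℂ := fun p => p.1.1 * Complex.exp (p.1.2 * p.2 - p.1.2 ^ 2 * v / 2)
  have hΦ : Measurable Φ := by fun_prop
  have hGz : Measurable fun ω => (G ω, z ω) := hGm.prodMk hz
  have hjoint : μ.map (fun ω => ((G ω, z ω), D ω)) =
      (μ.map fun ω => (G ω, z ω)).prod (gaussianReal 0 v) := by
    rw [(indepFun_iff_map_prod_eq_prod_map_map hGz.aemeasurable hD.aemeasurable).1 hind, hlaw]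
  have hΦint : Integrable Φ ((μ.map fun ω => (G ω, z ω)).prod (gaussianReal 0 v)) := by
    rw [← hjoint, integrable_map_measure hΦ.aestronglyMeasurable (hGz.prodMk hD).aemeasurable]
    exact integrable_mul_cexp_of_indepFun hG hz hD hlaw hind hK
  calc ∫ ω, Φ ((G ω, z ω), D ω) ∂μ
      = ∫ p, Φ p ∂(μ.map fun ω => (G ω, z ω)).prod (gaussianReal 0 v) := by
        rw [← hjoint, integral_map (hGz.prodMk hD).aemeasurable hΦ.aestronglyMeasurable]
    _ = ∫ p, p.1 ∂μ.map fun ω => (G ω, z ω) := by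
        rw [integral_prod _ hΦint]
        simp only [Φ, integral_const_mul, integral_cexp_mul_sub_gaussianReal, mul_one]
    _ = ∫ ω, G ω ∂μ := integral_map hGz.aemeasurable (by fun_prop)

end GaussianExp

/-! ### Absolute moments of Gaussian variables -/

section GaussianMoments

/-- The `p`-th absolute moment of the standard Gaussian. -/
def gaussianAbsMoment (p : ℕ) : ℝ := ∫ x, |x| ^ p ∂gaussianReal 0 1

lemma gaussianAbsMoment_two : gaussianAbsMoment 2 = 1 := by
  have hvar := variance_id_gaussianReal (μ := 0) (v := 1)
  rw [variance_eq_integral (by fun_prop)] at hvar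
  simpa [gaussianAbsMoment] using hvar

lemma integrable_abs_pow_gaussianReal (v : NNReal) (p : ℕ) :
    Integrable (fun x => |x| ^ p) (gaussianReal 0 v) := by
  simpa using (memLp_id_gaussianReal (μ := 0) (v := v) (p : NNReal)).integrable_norm_pow'

lemma integral_abs_pow_gaussianReal (v : NNReal) (p : ℕ) :
    ∫ x, |x| ^ p ∂gaussianReal 0 v = Real.sqrt v ^ p * gaussianAbsMoment p := by
  have hscale : (gaussianReal 0 1).map (Real.sqrt v * ·) = gaussianReal 0 v := by
    rw [gaussianReal_map_const_mul, mul_zero, mul_one]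
    exact congrArg (gaussianReal 0) (NNReal.eq (Real.sq_sqrt v.coe_nonneg))
  rw [← hscale, integral_map (by fun_prop) (by fun_prop), gaussianAbsMoment,
    ← integral_const_mul]
  simp [abs_mul, mul_pow, abs_of_nonneg]

end GaussianMoments

/-! ### Brownian increments -/

section BrownianMotion

variable {μ : Measure Ω} {F : ℝ → MeasurableSpace Ω} {W : ℝ → Ω → ℝ} {s t : ℝ}

namespace IsBM

lemma measurable_adapted (hW : IsBM μ F W) (ht : 0 ≤ t) : Measurable[F t] (W t) :=
  measurable_iff_comap_le.2 (hW.adapted t ht)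

protected lemma measurable (hW : IsBM μ F W) (ht : 0 ≤ t) : Measurable (W t) :=
  (hW.measurable_adapted ht).mono (hW.le t) le_rfl

lemma measurable_increment (hW : IsBM μ F W) (hs : 0 ≤ s) (hst : s ≤ t) :
    Measurable[F t] fun ω => W t ω - W s ω :=
  Measurable.sub (hW.measurable_adapted (hs.trans hst))
    ((hW.measurable_adapted hs).mono (hW.mono hst) le_rfl)

lemma indepFun_increment (hW : IsBM μ F W) (hs : 0 ≤ s) (hst : s ≤ t)
    {β : Type*} [MeasurableSpace β] {G : Ω → β} (hG : Measurable[F s] G) :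
    IndepFun G (fun ω => W t ω - W s ω) μ := by
  rw [IndepFun_iff_Indep]
  exact (indep_of_indep_of_le_right (hW.indep s t hs hst) (measurable_iff_comap_le.1 hG)).symm

lemma integrable_abs_increment_pow (hW : IsBM μ F W) (hs : 0 ≤ s) (hst : s ≤ t) (p : ℕ) :
    Integrable (fun ω => |W t ω - W s ω| ^ p) μ :=
  Integrable.comp_measurable (g := fun x => |x| ^ p)
    (hW.law s t hs hst ▸ integrable_abs_pow_gaussianReal _ p)
    ((hW.measurable_increment hs hst).mono (hW.le t) le_rfl)

lemma integral_abs_increment_pow (hW : IsBM μ F W) (hs : 0 ≤ s) (hst : s ≤ t) (p : ℕ) :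
    ∫ ω, |W t ω - W s ω| ^ p ∂μ = Real.sqrt (t - s) ^ p * gaussianAbsMoment p := by
  have hmeas := (hW.measurable_increment hs hst).mono (hW.le t) le_rfl
  rw [← integral_map (φ := fun ω => W t ω - W s ω) (f := fun x => |x| ^ p) hmeas.aemeasurable
    (by fun_prop), hW.law s t hs hst, integral_abs_pow_gaussianReal,
    Real.coe_toNNReal _ (sub_nonneg.2 hst)]

lemma integral_increment_sq (hW : IsBM μ F W) (hs : 0 ≤ s) (hst : s ≤ t) :
    ∫ ω, (W t ω - W s ω) ^ 2 ∂μ = t - s := by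
  have h := hW.integral_abs_increment_pow hs hst 2
  simpa only [sq_abs, gaussianAbsMoment_two, mul_one, Real.sq_sqrt (sub_nonneg.2 hst)] using h

variable [IsProbabilityMeasure μ]

lemma integral_increment_sq_sub (hW : IsBM μ F W) (hs : 0 ≤ s) (hst : s ≤ t) :
    ∫ ω, ((W t ω - W s ω) ^ 2 - (t - s)) ∂μ = 0 := by
  have hint : Integrable (fun ω => (W t ω - W s ω) ^ 2) μ := by
    simpa only [sq_abs] using hW.integrable_abs_increment_pow hs hst 2
  rw [integral_sub hint (integrable_const _), hW.integral_increment_sq hs hst]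
  simp

lemma memLp_increment_sq_sub (hW : IsBM μ F W) (hs : 0 ≤ s) (hst : s ≤ t) :
    MemLp (fun ω => (W t ω - W s ω) ^ 2 - (t - s)) 2 μ := by
  have hmeas : Measurable fun ω => W t ω - W s ω :=
    (hW.measurable_increment hs hst).mono (hW.le t) le_rfl
  have hsq : MemLp (fun ω => (W t ω - W s ω) ^ 2) 2 μ := by
    rw [memLp_two_iff_integrable_sq (hmeas.pow_const 2).aestronglyMeasurable]
    simpa only [← pow_mul, Even.pow_abs (by decide : Even (2 * 2))] using
      hW.integrable_abs_increment_pow hs hst (2 * 2)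
  exact hsq.sub (memLp_const _)

lemma integral_increment_sq_sub_sq (hW : IsBM μ F W) (hs : 0 ≤ s) (hst : s ≤ t) :
    ∫ ω, ((W t ω - W s ω) ^ 2 - (t - s)) ^ 2 ∂μ = (gaussianAbsMoment 4 - 1) * (t - s) ^ 2 := by
  have hfour : ∫ ω, (W t ω - W s ω) ^ 4 ∂μ = (t - s) ^ 2 * gaussianAbsMoment 4 := by
    have h := hW.integral_abs_increment_pow hs hst 4
    rwa [show Real.sqrt (t - s) ^ 4 = (Real.sqrt (t - s) ^ 2) ^ 2 by ring,
      Real.sq_sqrt (sub_nonneg.2 hst), integral_congr_ae (Eventually.of_forall fun ω =>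
        Even.pow_abs (by decide : Even 4) (W t ω - W s ω))] at h
  have hint₄ : Integrable (fun ω => (W t ω - W s ω) ^ 4) μ := by
    simpa only [Even.pow_abs (by decide : Even 4)] using
      hW.integrable_abs_increment_pow hs hst 4
  have hint : Integrable (fun ω => 2 * (t - s) * ((W t ω - W s ω) ^ 2 - (t - s))) μ :=
    ((hW.memLp_increment_sq_sub hs hst).integrable one_le_two).const_mul _
  calc _ = ∫ ω, ((W t ω - W s ω) ^ 4 - (t - s) ^ 2 -
          2 * (t - s) * ((W t ω - W s ω) ^ 2 - (t - s))) ∂μ := by congr with ω; ring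
    _ = ∫ ω, (W t ω - W s ω) ^ 4 ∂μ - (t - s) ^ 2 := by
      rw [integral_sub (by exact hint₄.sub (integrable_const _)) hint,
        integral_sub hint₄ (integrable_const _), integral_const_mul,
        hW.integral_increment_sq_sub hs hst]
      simp
    _ = _ := by rw [hfour]; ring

end IsBM

end BrownianMotion

/-! ### Discrete martingales built from Brownian increments -/

section DiscreteMartingales

variable {μ : Measure Ω} {F : ℝ → MeasurableSpace Ω} {W : ℝ → Ω → ℝ} {τ : ℕ → ℝ}

/-- The discrete exponential martingale with integrand `z` along the partition `τ`. -/
def expMart (W : ℝ → Ω → ℝ) (τ : ℕ → ℝ) (z : ℕ → Ω → ℂ) (n : ℕ) (ω : Ω) : ℂ :=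
  ∏ i ∈ Finset.range n, Complex.exp (z i ω * ((W (τ (i + 1)) ω - W (τ i) ω : ℝ) : ℂ) -
    z i ω ^ 2 * ((τ (i + 1) - τ i : ℝ) : ℂ) / 2)

/-- The discrete stochastic integral of `a` along the partition `τ` against the martingale
`W² - ⟨W⟩` of compensated squared increments. -/
def compSqSum (W : ℝ → Ω → ℝ) (τ : ℕ → ℝ) (a : ℕ → Ω → ℝ) (n : ℕ) (ω : Ω) : ℝ :=
  ∑ i ∈ Finset.range n, a i ω * ((W (τ (i + 1)) ω - W (τ i) ω) ^ 2 - (τ (i + 1) - τ i))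

lemma measurable_expMart (hW : IsBM μ F W) (hτ : Monotone τ) (hτ₀ : 0 ≤ τ 0) {z : ℕ → Ω → ℂ}
    (hz : ∀ i, Measurable[F (τ i)] (z i)) (n : ℕ) : Measurable[F (τ n)] (expMart W τ z n) := by
  unfold expMart
  refine Finset.measurable_fun_prod (m := F (τ n)) _ fun i hi => ?_
  have hin : i + 1 ≤ n := Finset.mem_range.1 hi
  have hinc : Measurable[F (τ n)] fun ω => W (τ (i + 1)) ω - W (τ i) ω :=
    (hW.measurable_increment (hτ₀.trans (hτ i.zero_le)) (hτ i.le_succ)).mono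
      (hW.mono (hτ hin)) le_rfl
  have hzi : Measurable[F (τ n)] (z i) :=
    (hz i).mono (hW.mono (hτ (i.le_succ.trans hin))) le_rfl
  fun_prop

lemma integrable_expMart_and_integral_eq_one [IsProbabilityMeasure μ] (hW : IsBM μ F W)
    (hτ : Monotone τ) (hτ₀ : 0 ≤ τ 0) {z : ℕ → Ω → ℂ} (hz : ∀ i, Measurable[F (τ i)] (z i))
    {K : ℝ} (hK : ∀ i ω, ‖z i ω‖ ≤ K) (n : ℕ) :
    Integrable (expMart W τ z n) μ ∧ ∫ ω, expMart W τ z n ω ∂μ = 1 := by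
  induction n with
  | zero => simp [funext fun ω => show expMart W τ z 0 ω = 1 by simp [expMart]]
  | succ n ih =>
    have hn₀ : 0 ≤ τ n := hτ₀.trans (hτ n.zero_le)
    have hn : τ n ≤ τ (n + 1) := hτ n.le_succ
    have hM := measurable_expMart hW hτ hτ₀ hz n
    have hinc : Measurable fun ω => W (τ (n + 1)) ω - W (τ n) ω :=
      (hW.measurable_increment hn₀ hn).mono (hW.le _) le_rfl
    have hlaw := hW.law _ _ hn₀ hn
    have hind := hW.indepFun_increment hn₀ hn (hM.prodMk (hz n))
    have hzm : Measurable (z n) := (hz n).mono (hW.le _) le_rfl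
    have hstep : expMart W τ z (n + 1) = fun ω => expMart W τ z n ω *
        Complex.exp (z n ω * ((W (τ (n + 1)) ω - W (τ n) ω : ℝ) : ℂ) -
          z n ω ^ 2 * (τ (n + 1) - τ n).toNNReal / 2) := by
      ext ω
      rw [expMart, Finset.prod_range_succ]
      congr 5
      simp [hn]
    rw [hstep]
    exact ⟨integrable_mul_cexp_of_indepFun ih.1 hzm hinc hlaw hind (hK n),
      (integral_mul_cexp_of_indepFun (hM.mono (hW.le _) le_rfl) ih.1 hzm hinc hlaw hind
        (hK n)).trans ih.2⟩

lemma memLp_add_mul_and_integral_sq_le_of_indepFun [IsProbabilityMeasure μ] {S a ξ : Ω → ℝ}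
    {C : ℝ} (hS : MemLp S 2 μ) (ha : Measurable a) (hC : ∀ ω, |a ω| ≤ C) (hξ : MemLp ξ 2 μ)
    (hmean : ∫ ω, ξ ω ∂μ = 0) (hind : IndepFun (fun ω => (S ω, a ω)) ξ μ) :
    MemLp (fun ω => S ω + a ω * ξ ω) 2 μ ∧
      ∫ ω, (S ω + a ω * ξ ω) ^ 2 ∂μ ≤ ∫ ω, S ω ^ 2 ∂μ + C ^ 2 * ∫ ω, ξ ω ^ 2 ∂μ := by
  have haξ : MemLp (fun ω => a ω * ξ ω) 2 μ :=
    hξ.of_le_mul (c := C) (ha.aestronglyMeasurable.mul hξ.1) (Eventually.of_forall fun ω => by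
      rw [norm_mul]; exact mul_le_mul_of_nonneg_right (hC ω) (norm_nonneg _))
  have hcross : ∫ ω, S ω * (a ω * ξ ω) ∂μ = 0 := by
    have hprod := (hind.comp (φ := fun p : ℝ × ℝ => p.1 * p.2) (by fun_prop)
      measurable_id).integral_fun_mul_eq_mul_integral
        (hS.1.mul ha.aestronglyMeasurable) hξ.1
    simp only [Function.comp_apply, id, hmean, mul_zero, mul_assoc] at hprod
    exact hprod
  have hsq_le : ∫ ω, (a ω * ξ ω) ^ 2 ∂μ ≤ C ^ 2 * ∫ ω, ξ ω ^ 2 ∂μ := by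
    rw [← integral_const_mul]
    refine integral_mono haξ.integrable_sq (hξ.integrable_sq.const_mul _) fun ω => ?_
    rw [mul_pow, ← sq_abs (a ω)]
    have := hC ω
    gcongr
  refine ⟨hS.add haξ, ?_⟩
  have hSaξ : Integrable (fun ω => 2 * (S ω * (a ω * ξ ω))) μ :=
    (hS.integrable_mul haξ).const_mul 2
  calc ∫ ω, (S ω + a ω * ξ ω) ^ 2 ∂μ
      = ∫ ω, (S ω ^ 2 + 2 * (S ω * (a ω * ξ ω)) + (a ω * ξ ω) ^ 2) ∂μ := by congr with ω; ring
    _ = ∫ ω, S ω ^ 2 ∂μ + ∫ ω, (a ω * ξ ω) ^ 2 ∂μ := by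
      rw [integral_add (by exact hS.integrable_sq.add hSaξ) haξ.integrable_sq,
        integral_add hS.integrable_sq hSaξ, integral_const_mul, hcross, mul_zero, add_zero]
    _ ≤ _ := by gcongr

lemma measurable_compSqSum (hW : IsBM μ F W) (hτ : Monotone τ) (hτ₀ : 0 ≤ τ 0) {a : ℕ → Ω → ℝ}
    (ha : ∀ i, Measurable[F (τ i)] (a i)) (n : ℕ) : Measurable[F (τ n)] (compSqSum W τ a n) := by
  unfold compSqSum
  refine Finset.measurable_fun_sum (m := F (τ n)) _ fun i hi => ?_
  have hin : i + 1 ≤ n := Finset.mem_range.1 hi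
  have hinc : Measurable[F (τ n)] fun ω => W (τ (i + 1)) ω - W (τ i) ω :=
    (hW.measurable_increment (hτ₀.trans (hτ i.zero_le)) (hτ i.le_succ)).mono
      (hW.mono (hτ hin)) le_rfl
  have hai : Measurable[F (τ n)] (a i) :=
    (ha i).mono (hW.mono (hτ (i.le_succ.trans hin))) le_rfl
  fun_prop

lemma memLp_compSqSum_and_integral_sq_le [IsProbabilityMeasure μ] (hW : IsBM μ F W)
    (hτ : Monotone τ) (hτ₀ : 0 ≤ τ 0) {a : ℕ → Ω → ℝ} (ha : ∀ i, Measurable[F (τ i)] (a i))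
    {C : ℝ} (hC : ∀ i ω, |a i ω| ≤ C) (n : ℕ) :
    MemLp (compSqSum W τ a n) 2 μ ∧ ∫ ω, compSqSum W τ a n ω ^ 2 ∂μ ≤
      C ^ 2 * (gaussianAbsMoment 4 - 1) * ∑ i ∈ Finset.range n, (τ (i + 1) - τ i) ^ 2 := by
  induction n with
  | zero => simp [funext fun ω => show compSqSum W τ a 0 ω = 0 by simp [compSqSum]]
  | succ n ih =>
    have hn₀ : 0 ≤ τ n := hτ₀.trans (hτ n.zero_le)
    have hn : τ n ≤ τ (n + 1) := hτ n.le_succ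
    have hind := (hW.indepFun_increment hn₀ hn
      ((measurable_compSqSum hW hτ hτ₀ ha n).prodMk (ha n))).comp measurable_id
        (by fun_prop : Measurable fun x : ℝ => x ^ 2 - (τ (n + 1) - τ n))
    have hstep := memLp_add_mul_and_integral_sq_le_of_indepFun ih.1
      ((ha n).mono (hW.le _) le_rfl) (hC n) (hW.memLp_increment_sq_sub hn₀ hn)
      (hW.integral_increment_sq_sub hn₀ hn) hind
    rw [hW.integral_increment_sq_sub_sq hn₀ hn] at hstep
    have hsucc : compSqSum W τ a (n + 1) = fun ω => compSqSum W τ a n ω +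
        a n ω * ((W (τ (n + 1)) ω - W (τ n) ω) ^ 2 - (τ (n + 1) - τ n)) := by
      ext ω; simp only [compSqSum, Finset.sum_range_succ]
    rw [hsucc, Finset.sum_range_succ]
    exact ⟨hstep.1, hstep.2.trans (by linarith [ih.2])⟩

end DiscreteMartingales

/-! ### Passing to the limit under the integral -/

section Limits

variable {μ : Measure Ω} {E : Type*} [NormedAddCommGroup E]

lemma unifIntegrable_one_of_eLpNorm_le {ι : Type*} {f : ι → Ω → E} {p C : ENNReal} (hp : 1 < p)
    (hf : ∀ i, AEStronglyMeasurable (f i) μ) (hC : C ≠ ⊤) (hfC : ∀ i, eLpNorm (f i) p μ ≤ C) :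
    UnifIntegrable f 1 μ := by
  intro ε hε
  set r : ℝ := 1 / (1 : ENNReal).toReal - 1 / p.toReal
  have hr : 0 < r := by
    rcases eq_or_ne p ⊤ with rfl | hp'
    · simp [r]
    · have : 1 < p.toReal := by simpa using (ENNReal.toReal_lt_toReal (by simp) hp').2 hp
      simpa [r] using inv_lt_one_of_one_lt₀ this
  have hlim : Tendsto (fun δ : ℝ => C * ENNReal.ofReal δ ^ r) (nhdsWithin 0 (Ioi 0)) (nhds 0) := by
    have hpow : Tendsto (fun δ : ℝ => ENNReal.ofReal δ ^ r) (nhds 0) (nhds 0) := by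
      have := (ENNReal.continuous_rpow_const (y := r)).comp ENNReal.continuous_ofReal
      simpa [Function.comp_def, hr] using this.tendsto 0
    simpa using ENNReal.Tendsto.const_mul (hpow.mono_left nhdsWithin_le_nhds) (Or.inr hC)
  obtain ⟨δ, hδε, hδ⟩ := ((hlim.eventually_le_const (ENNReal.ofReal_pos.2 hε)).and
    self_mem_nhdsWithin).exists
  refine ⟨δ, hδ, fun i s hs hsδ => ?_⟩
  calc eLpNorm (s.indicator (f i)) 1 μ
      = eLpNorm (f i) 1 (μ.restrict s) := eLpNorm_indicator_eq_eLpNorm_restrict hs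
    _ ≤ eLpNorm (f i) p (μ.restrict s) * μ.restrict s univ ^ r :=
      eLpNorm_le_eLpNorm_mul_rpow_measure_univ hp.le (hf i).restrict
    _ ≤ C * ENNReal.ofReal δ ^ r := by
      gcongr
      · exact (eLpNorm_restrict_le _ _ _ _).trans (hfC i)
      · simpa using hsδ
    _ ≤ ENNReal.ofReal ε := hδε

lemma tendsto_integral_of_eLpNorm_le [NormedSpace ℝ E] [IsFiniteMeasure μ] {f : ℕ → Ω → E}
    {g : Ω → E} {p C : ENNReal} (hp : 1 < p) (hf : ∀ n, AEStronglyMeasurable (f n) μ)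
    (hC : C ≠ ⊤) (hfC : ∀ n, eLpNorm (f n) p μ ≤ C)
    (hfg : ∀ᵐ ω ∂μ, Tendsto (fun n => f n ω) atTop (nhds (g ω))) :
    Tendsto (fun n => ∫ ω, f n ω ∂μ) atTop (nhds (∫ ω, g ω ∂μ)) := by
  have hint (n : ℕ) : Integrable (f n) μ :=
    MemLp.integrable hp.le ⟨hf n, (hfC n).trans_lt hC.lt_top⟩
  have hg : MemLp g p μ := ⟨aestronglyMeasurable_of_tendsto_ae _ hf hfg,
    (Lp.eLpNorm_le_of_ae_tendsto (.of_forall hfC) hf hfg).trans_lt hC.lt_top⟩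
  refine tendsto_integral_of_L1' g hg.1 (.of_forall hint) ?_
  exact tendsto_Lp_finite_of_tendsto_ae le_rfl ENNReal.one_ne_top hf (hg.mono_exponent hp.le)
    (unifIntegrable_one_of_eLpNorm_le hp hf hC hfC) hfg

lemma exists_subseq_tendsto_zero_ae_of_integral_norm_le {f : ℕ → Ω → E} {b : ℕ → ℝ}
    (hf : ∀ n, Integrable (f n) μ) (hfb : ∀ n, ∫ ω, ‖f n ω‖ ∂μ ≤ b n)
    (hb : Tendsto b atTop (nhds 0)) :
    ∃ ns : ℕ → ℕ, StrictMono ns ∧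
      ∀ᵐ ω ∂μ, Tendsto (fun k => f (ns k) ω) atTop (nhds 0) := by
  suffices h : TendstoInMeasure μ f atTop fun _ => 0 from h.exists_seq_tendsto_ae
  refine tendstoInMeasure_of_tendsto_eLpNorm one_ne_zero (fun n => (hf n).1)
    aestronglyMeasurable_const ?_
  have hb' : Tendsto (fun n => ENNReal.ofReal (b n)) atTop (nhds 0) := by
    simpa using ENNReal.tendsto_ofReal hb
  refine tendsto_of_tendsto_of_tendsto_of_le_of_le tendsto_const_nhds hb' (fun _ => zero_le)
    fun n => ?_
  have hsub : (f n - fun _ => 0) = f n := sub_zero _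
  rw [hsub, eLpNorm_one_eq_lintegral_enorm, ← ofReal_integral_norm_eq_lintegral_enorm (hf n)]
  exact ENNReal.ofReal_le_ofReal (hfb n)

end Limits

/-! ### A discrete Itô formula -/

section DiscreteIto

variable {μ : Measure Ω} {F : ℝ → MeasurableSpace Ω} {W Y : ℝ → Ω → ℝ} {f f' f'' : ℝ → ℝ}
  {A B c t : ℝ}

/-- The error made in Itô's formula `f(y_b) - f(y_a) ≈ ∑ f'(y) Δy + ½ ∑ f''(y) Δτ` along the
first `n` steps of the partition `τ`, for a path `y` whose quadratic variation is that of a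
Brownian motion. -/
def itoRemainder (f f' f'' y : ℝ → ℝ) (τ : ℕ → ℝ) (n : ℕ) : ℝ :=
  ∑ i ∈ Finset.range n, (f (y (τ (i + 1))) - f (y (τ i)) -
    f' (y (τ i)) * (y (τ (i + 1)) - y (τ i)) - f'' (y (τ i)) / 2 * (τ (i + 1) - τ i))

/-- Bounds the error of the expansion
`f(x + D) ≈ f(x) + f'(x) D + ½ f''(x) d²` when `|D - d| ≤ η`, `|f''| ≤ B` and the second order
Taylor error of `f` is at most `A |D|³`. -/
def taylorErrorBound (A B η d : ℝ) : ℝ :=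
  4 * A * (|d| ^ 3 + η ^ 3) + B / 2 * (2 * |d| * η + η ^ 2)

/-- The sum of `taylorErrorBound` over the first `n` steps of the partition `τ`, the noise being
the increments of the path `w` and the perturbation at most `c` times the step. -/
def taylorErrorSum (A B c : ℝ) (w : ℝ → ℝ) (τ : ℕ → ℝ) (n : ℕ) : ℝ :=
  ∑ i ∈ Finset.range n, taylorErrorBound A B (c * (τ (i + 1) - τ i)) (w (τ (i + 1)) - w (τ i))

lemma taylorErrorSum_nonneg (hA : 0 ≤ A) (hB : 0 ≤ B) (hc : 0 ≤ c) (w : ℝ → ℝ) {τ : ℕ → ℝ}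
    (hτ : Monotone τ) (n : ℕ) : 0 ≤ taylorErrorSum A B c w τ n := by
  refine Finset.sum_nonneg fun i _ => ?_
  have : 0 ≤ τ (i + 1) - τ i := sub_nonneg.2 (hτ i.le_succ)
  unfold taylorErrorBound
  positivity

lemma abs_taylor_error_le (hf : ∀ x d, |f (x + d) - f x - f' x * d - f'' x / 2 * d ^ 2| ≤
      A * |d| ^ 3) (hB : ∀ x, |f'' x| ≤ B) {x D d η : ℝ} (hD : |D - d| ≤ η) :
    |f (x + D) - f x - f' x * D - f'' x / 2 * d ^ 2| ≤ taylorErrorBound A B η d := by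
  have hA : 0 ≤ A := by simpa using (abs_nonneg _).trans (hf 0 1)
  have hη : 0 ≤ η := (abs_nonneg _).trans hD
  have hD' : |D| ≤ |d| + η := by linarith [abs_sub_abs_le_abs_sub D d]
  have hcube : |D| ^ 3 ≤ 4 * (|d| ^ 3 + η ^ 3) := by
    calc |D| ^ 3 ≤ (|d| + η) ^ 3 := by gcongr
      _ ≤ 4 * (|d| ^ 3 + η ^ 3) := by
        nlinarith [mul_nonneg (add_nonneg (abs_nonneg d) hη) (sq_nonneg (|d| - η))]
  have hsq : |D ^ 2 - d ^ 2| ≤ 2 * |d| * η + η ^ 2 := by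
    calc |D ^ 2 - d ^ 2| = |D - d| * |D + d| := by rw [← abs_mul]; congr 1; ring
      _ ≤ η * (2 * |d| + η) := by
        gcongr
        linarith [abs_add_le D d]
      _ = 2 * |d| * η + η ^ 2 := by ring
  have hquad : |f'' x / 2 * (D ^ 2 - d ^ 2)| ≤ B / 2 * (2 * |d| * η + η ^ 2) := by
    have hB₀ : 0 ≤ B := (abs_nonneg _).trans (hB x)
    rw [abs_mul, abs_div, abs_two]
    gcongr
    exact hB x
  calc |f (x + D) - f x - f' x * D - f'' x / 2 * d ^ 2|
      = |(f (x + D) - f x - f' x * D - f'' x / 2 * D ^ 2) + f'' x / 2 * (D ^ 2 - d ^ 2)| := by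
        congr 1; ring
    _ ≤ A * |D| ^ 3 + B / 2 * (2 * |d| * η + η ^ 2) :=
        (abs_add_le _ _).trans (add_le_add (hf x D) hquad)
    _ ≤ taylorErrorBound A B η d := by
        rw [taylorErrorBound]
        linarith [mul_le_mul_of_nonneg_left hcube hA]

lemma abs_itoRemainder_le (hf : ∀ x d, |f (x + d) - f x - f' x * d - f'' x / 2 * d ^ 2| ≤
      A * |d| ^ 3) (hB : ∀ x, |f'' x| ≤ B) {w y : ℝ → ℝ} {τ : ℕ → ℝ}
    (hinc : ∀ i, |(y (τ (i + 1)) - y (τ i)) - (w (τ (i + 1)) - w (τ i))| ≤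
      c * (τ (i + 1) - τ i)) (n : ℕ) :
    |itoRemainder f f' f'' y τ n| ≤ taylorErrorSum A B c w τ n +
      |∑ i ∈ Finset.range n,
        f'' (y (τ i)) / 2 * ((w (τ (i + 1)) - w (τ i)) ^ 2 - (τ (i + 1) - τ i))| := by
  have hsplit : itoRemainder f f' f'' y τ n = ∑ i ∈ Finset.range n,
      (f (y (τ i) + (y (τ (i + 1)) - y (τ i))) - f (y (τ i)) -
        f' (y (τ i)) * (y (τ (i + 1)) - y (τ i)) -
        f'' (y (τ i)) / 2 * (w (τ (i + 1)) - w (τ i)) ^ 2) +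
      ∑ i ∈ Finset.range n,
        f'' (y (τ i)) / 2 * ((w (τ (i + 1)) - w (τ i)) ^ 2 - (τ (i + 1) - τ i)) := by
    rw [itoRemainder, ← Finset.sum_add_distrib]
    refine Finset.sum_congr rfl fun i _ => ?_
    rw [add_sub_cancel]
    ring
  rw [hsplit]
  refine (abs_add_le _ _).trans (add_le_add_left ?_ _)
  exact (Finset.abs_sum_le_sum_abs _ _).trans
    (Finset.sum_le_sum fun i _ => abs_taylor_error_le hf hB (hinc i))

lemma IsBM.integrable_taylorErrorBound [IsProbabilityMeasure μ] (hW : IsBM μ F W) {r s : ℝ}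
    (hr : 0 ≤ r) (hrs : r ≤ s) (η : ℝ) :
    Integrable (fun ω => taylorErrorBound A B η (W s ω - W r ω)) μ := by
  have h₃ := hW.integrable_abs_increment_pow hr hrs 3
  have h₁ := hW.integrable_abs_increment_pow hr hrs 1
  simp only [pow_one] at h₁
  unfold taylorErrorBound
  fun_prop

/-- The mean of `taylorErrorBound` for a Brownian increment over a time `h`, divided by `h`. -/
def meanTaylorError (A B c h : ℝ) : ℝ :=
  4 * A * (√h * gaussianAbsMoment 3 + c ^ 3 * h ^ 2) +
    B / 2 * (2 * (√h * gaussianAbsMoment 1) * c + c ^ 2 * h)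

lemma tendsto_meanTaylorError_zero (A B c : ℝ) :
    Tendsto (meanTaylorError A B c) (nhds 0) (nhds 0) := by
  have hcont : Continuous (meanTaylorError A B c) := by unfold meanTaylorError; fun_prop
  simpa [meanTaylorError] using hcont.tendsto 0

lemma IsBM.integral_taylorErrorBound [IsProbabilityMeasure μ] (hW : IsBM μ F W) {r s : ℝ}
    (hr : 0 ≤ r) (hrs : r ≤ s) :
    ∫ ω, taylorErrorBound A B (c * (s - r)) (W s ω - W r ω) ∂μ =
      (s - r) * meanTaylorError A B c (s - r) := by
  have h₃ := hW.integrable_abs_increment_pow hr hrs 3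
  have h₁ := hW.integrable_abs_increment_pow hr hrs 1
  have e₃ := hW.integral_abs_increment_pow hr hrs 3
  have e₁ := hW.integral_abs_increment_pow hr hrs 1
  simp only [pow_one] at h₁ e₁
  have hsqrt : √(s - r) ^ 3 = (s - r) * √(s - r) := by
    rw [pow_succ, Real.sq_sqrt (sub_nonneg.2 hrs)]
  simp only [taylorErrorBound]
  rw [integral_add (by fun_prop) (by fun_prop), integral_const_mul, integral_const_mul,
    integral_add h₃ (by fun_prop), integral_add (by fun_prop) (by fun_prop), integral_mul_const,
    integral_const_mul, e₃, e₁, hsqrt]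
  simp only [integral_const, probReal_univ, one_smul, meanTaylorError]
  ring

lemma IsBM.integrable_taylorErrorSum [IsProbabilityMeasure μ] (hW : IsBM μ F W) (ht : 0 ≤ t)
    (n : ℕ) : Integrable (fun ω => taylorErrorSum A B c (W · ω) (grid t n) n) μ :=
  integrable_finsetSum _ fun i _ =>
    hW.integrable_taylorErrorBound (grid_nonneg ht n i) (monotone_grid ht n i.le_succ) _

lemma IsBM.integral_taylorErrorSum [IsProbabilityMeasure μ] (hW : IsBM μ F W) (ht : 0 ≤ t)
    (n : ℕ) : ∫ ω, taylorErrorSum A B c (W · ω) (grid t n) n ∂μ =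
      grid t n n * meanTaylorError A B c (t / n) := by
  have hstep (i : ℕ) : grid t n i ≤ grid t n (i + 1) := monotone_grid ht n i.le_succ
  simp only [taylorErrorSum]
  rw [integral_finsetSum _ fun i _ =>
    hW.integrable_taylorErrorBound (grid_nonneg ht n i) (hstep i) _]
  rw [Finset.sum_congr rfl fun i _ =>
    hW.integral_taylorErrorBound (grid_nonneg ht n i) (hstep i)]
  simp only [grid_succ_sub, Finset.sum_const, Finset.card_range, nsmul_eq_mul]
  rw [grid, mul_assoc]

lemma memLp_compSqSum_and_integral_sq_le_grid [IsProbabilityMeasure μ] (hW : IsBM μ F W)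
    (ht : 0 ≤ t) (n : ℕ) {a : ℕ → Ω → ℝ} (ha : ∀ i, Measurable[F (grid t n i)] (a i)) {C : ℝ}
    (hC : ∀ i ω, |a i ω| ≤ C) :
    MemLp (compSqSum W (grid t n) a n) 2 μ ∧ ∫ ω, compSqSum W (grid t n) a n ω ^ 2 ∂μ ≤
      grid t n n * (C ^ 2 * (gaussianAbsMoment 4 - 1) * (t / n)) := by
  obtain ⟨hQ, hQ_le⟩ := memLp_compSqSum_and_integral_sq_le hW (monotone_grid ht n)
    (grid_nonneg ht n 0) ha hC n
  refine ⟨hQ, hQ_le.trans_eq ?_⟩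
  simp only [grid_succ_sub, Finset.sum_const, Finset.card_range, nsmul_eq_mul]
  rw [grid]
  ring

lemma exists_subseq_tendsto_taylorErrorSum_compSqSum_zero [IsProbabilityMeasure μ]
    (hW : IsBM μ F W) (hA : 0 ≤ A) (hB : 0 ≤ B) (hc : 0 ≤ c) (ht : 0 ≤ t) {a : ℕ → ℕ → Ω → ℝ}
    (ha : ∀ n i, Measurable[F (grid t n i)] (a n i)) {C : ℝ} (hC : ∀ n i ω, |a n i ω| ≤ C) :
    ∃ ns : ℕ → ℕ, StrictMono ns ∧ ∀ᵐ ω ∂μ,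
      Tendsto (fun k => taylorErrorSum A B c (W · ω) (grid t (ns k)) (ns k)) atTop (nhds 0) ∧
      Tendsto (fun k => |compSqSum W (grid t (ns k)) (a (ns k)) (ns k) ω|) atTop (nhds 0) := by
  set T : ℕ → Ω → ℝ := fun n ω => taylorErrorSum A B c (W · ω) (grid t n) n
  set Q : ℕ → Ω → ℝ := fun n => compSqSum W (grid t n) (a n) n
  have hT₀ (n : ℕ) (ω : Ω) : 0 ≤ T n ω :=
    taylorErrorSum_nonneg hA hB hc _ (monotone_grid ht n) n
  have hT (n : ℕ) : Integrable (T n) μ := hW.integrable_taylorErrorSum ht n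
  have hQ (n : ℕ) : MemLp (Q n) 2 μ ∧ ∫ ω, Q n ω ^ 2 ∂μ ≤ _ :=
    memLp_compSqSum_and_integral_sq_le_grid hW ht n (ha n) (hC n)
  have hnorm (n : ℕ) (ω : Ω) : ‖T n ω + Q n ω ^ 2‖ = T n ω + Q n ω ^ 2 :=
    Real.norm_of_nonneg (add_nonneg (hT₀ n ω) (sq_nonneg _))
  have hrate : Tendsto (fun n : ℕ => grid t n n * (meanTaylorError A B c (t / n) +
      C ^ 2 * (gaussianAbsMoment 4 - 1) * (t / n))) atTop (nhds 0) := by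
    have hmesh := tendsto_const_div_atTop_nhds_zero_nat t
    simpa using (tendsto_grid_self t).mul
      (((tendsto_meanTaylorError_zero A B c).comp hmesh).add (hmesh.const_mul _))
  obtain ⟨ns, hns, hlim⟩ := exists_subseq_tendsto_zero_ae_of_integral_norm_le
    (f := fun n ω => T n ω + Q n ω ^ 2) (fun n => (hT n).add (hQ n).1.integrable_sq) (fun n => by
      simp only [hnorm]
      rw [integral_add (hT n) (hQ n).1.integrable_sq, hW.integral_taylorErrorSum ht, mul_add]
      exact add_le_add_right (hQ n).2 _) hrate
  refine ⟨ns, hns, hlim.mono fun ω hω => ⟨?_, ?_⟩⟩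
  · exact squeeze_zero (fun k => hT₀ _ ω) (fun k => le_add_of_nonneg_right (sq_nonneg _)) hω
  · have hsq : Tendsto (fun k => Q (ns k) ω ^ 2) atTop (nhds 0) :=
      squeeze_zero (fun k => sq_nonneg _) (fun k => le_add_of_nonneg_left (hT₀ _ ω)) hω
    simpa [Real.sqrt_sq_eq_abs] using hsq.sqrt

lemma exists_subseq_tendsto_itoRemainder_zero [IsProbabilityMeasure μ] (hW : IsBM μ F W)
    (hY : ∀ s, 0 ≤ s → Measurable[F s] (Y s))
    (hinc : ∀ᵐ ω ∂μ, ∀ r s, 0 ≤ r → r ≤ s →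
      |(Y s ω - Y r ω) - (W s ω - W r ω)| ≤ c * (s - r))
    (hf : ∀ x d, |f (x + d) - f x - f' x * d - f'' x / 2 * d ^ 2| ≤ A * |d| ^ 3)
    (hf'' : Measurable f'') (hB : ∀ x, |f'' x| ≤ B) (ht : 0 ≤ t) :
    ∃ ns : ℕ → ℕ, StrictMono ns ∧ ∀ᵐ ω ∂μ,
      Tendsto (fun k => itoRemainder f f' f'' (Y · ω) (grid t (ns k)) (ns k)) atTop (nhds 0) := by
  have hA : 0 ≤ A := by simpa using (abs_nonneg _).trans (hf 0 1)
  have hB₀ : 0 ≤ B := (abs_nonneg _).trans (hB 0)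
  have hc : 0 ≤ c := by
    obtain ⟨ω, hω⟩ := hinc.exists
    simpa using (abs_nonneg _).trans (hω 0 1 le_rfl zero_le_one)
  obtain ⟨ns, hns, hlim⟩ := exists_subseq_tendsto_taylorErrorSum_compSqSum_zero hW hA hB₀ hc ht
    (a := fun n i ω => f'' (Y (grid t n i) ω) / 2) (C := B / 2)
    (fun n i => (hf''.comp (hY _ (grid_nonneg ht n i))).div_const 2)
    (fun n i ω => by rw [abs_div, abs_two]; linarith [hB (Y (grid t n i) ω)])
  refine ⟨ns, hns, ?_⟩
  filter_upwards [hlim, hinc] with ω hω hincω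
  refine squeeze_zero_norm (fun k => ?_) (by simpa using hω.1.add hω.2)
  exact abs_itoRemainder_le hf hB
    (fun i => hincω _ _ (grid_nonneg ht _ i) (monotone_grid ht _ i.le_succ)) _

end DiscreteIto

/-! ### Exponentially tilted characters of Brownian increments -/

section TiltedCharacter

/-- The product of the discrete Girsanov density `exp (∑ σ ΔW - ∑ σ² Δτ / 2)` along the partition
`τ` and of the character with frequencies `θ` of the shifted increments `ΔW - σ Δτ`. -/
def tiltedChar (w : ℝ → ℝ) (τ σ θ : ℕ → ℝ) (n : ℕ) : ℂ :=
  Complex.exp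
    ((∑ i ∈ Finset.range n,
        (σ i * (w (τ (i + 1)) - w (τ i)) - σ i ^ 2 * (τ (i + 1) - τ i) / 2) : ℝ) +
      (∑ i ∈ Finset.range n,
        θ i * (w (τ (i + 1)) - w (τ i) - σ i * (τ (i + 1) - τ i)) : ℝ) * Complex.I)

lemma norm_tiltedChar (w : ℝ → ℝ) (τ σ θ : ℕ → ℝ) (n : ℕ) :
    ‖tiltedChar w τ σ θ n‖ = Real.exp (∑ i ∈ Finset.range n,
      (σ i * (w (τ (i + 1)) - w (τ i)) - σ i ^ 2 * (τ (i + 1) - τ i) / 2)) := by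
  rw [tiltedChar, Complex.norm_exp, Complex.add_re, Complex.ofReal_re, Complex.re_ofReal_mul,
    Complex.I_re, mul_zero, add_zero]

lemma tiltedChar_mul_cexp {Ω : Type*} (W : ℝ → Ω → ℝ) (τ θ : ℕ → ℝ) (σ : ℕ → Ω → ℝ) (n : ℕ)
    (ω : Ω) :
    tiltedChar (W · ω) τ (σ · ω) θ n *
        Complex.exp (∑ i ∈ Finset.range n, θ i ^ 2 * (τ (i + 1) - τ i) / 2 : ℝ) =
      expMart W τ (fun i ω => σ i ω + θ i * Complex.I) n ω := by
  rw [tiltedChar, expMart, ← Complex.exp_sum, ← Complex.exp_add]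
  push_cast
  rw [Finset.sum_mul, ← Finset.sum_add_distrib, ← Finset.sum_add_distrib]
  refine congrArg _ (Finset.sum_congr rfl fun i _ => ?_)
  ring_nf
  rw [Complex.I_sq]
  ring

lemma expMart_ofReal {Ω : Type*} (W : ℝ → Ω → ℝ) (τ : ℕ → ℝ) (σ : ℕ → Ω → ℝ) (n : ℕ) (ω : Ω) :
    expMart W τ (fun i ω => σ i ω) n ω = Real.exp (∑ i ∈ Finset.range n,
      (σ i ω * (W (τ (i + 1)) ω - W (τ i) ω) - σ i ω ^ 2 * (τ (i + 1) - τ i) / 2)) := by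
  rw [expMart, ← Complex.exp_sum]
  push_cast
  rfl

lemma norm_tiltedChar_sq_le {Ω : Type*} (W : ℝ → Ω → ℝ) {τ : ℕ → ℝ} (hτ : Monotone τ)
    {σ : ℕ → Ω → ℝ} {C : ℝ} {ω : Ω} (hC : ∀ i, |σ i ω| ≤ C) (θ : ℕ → ℝ) (n : ℕ) :
    ‖tiltedChar (W · ω) τ (σ · ω) θ n‖ ^ 2 ≤
      ‖expMart W τ (fun i ω => (2 * σ i ω : ℝ)) n ω‖ * Real.exp (C ^ 2 * (τ n - τ 0)) := by
  rw [expMart_ofReal, Complex.norm_real, Real.norm_of_nonneg (Real.exp_nonneg _), norm_tiltedChar,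
    ← Real.exp_nat_mul, ← Real.exp_add, ← Finset.sum_range_sub τ n, Finset.mul_sum, Finset.mul_sum,
    ← Finset.sum_add_distrib]
  gcongr with i
  have hsq : σ i ω ^ 2 ≤ C ^ 2 := sq_le_sq' (abs_le.1 (hC i)).1 (abs_le.1 (hC i)).2
  push_cast
  linarith [mul_le_mul_of_nonneg_right hsq (sub_nonneg.2 (hτ i.le_succ))]

variable {μ : Measure Ω} {F : ℝ → MeasurableSpace Ω} {W : ℝ → Ω → ℝ} {τ θ : ℕ → ℝ}
  {σ : ℕ → Ω → ℝ} {C K : ℝ}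

lemma IsBM.measurable_tiltedChar (hW : IsBM μ F W) (hτ : Monotone τ) (hτ₀ : 0 ≤ τ 0)
    (hσ : ∀ i, Measurable (σ i)) (n : ℕ) :
    Measurable fun ω => tiltedChar (W · ω) τ (σ · ω) θ n := by
  have hWτ (i : ℕ) : Measurable (W (τ i)) := hW.measurable (hτ₀.trans (hτ i.zero_le))
  unfold tiltedChar
  fun_prop

variable [IsProbabilityMeasure μ]

lemma IsBM.integral_tiltedChar (hW : IsBM μ F W) (hτ : Monotone τ) (hτ₀ : 0 ≤ τ 0)
    (hσ : ∀ i, Measurable[F (τ i)] (σ i)) (hC : ∀ i ω, |σ i ω| ≤ C) (hK : ∀ i, |θ i| ≤ K)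
    (n : ℕ) :
    ∫ ω, tiltedChar (W · ω) τ (σ · ω) θ n ∂μ =
      Complex.exp (-(∑ i ∈ Finset.range n, θ i ^ 2 * (τ (i + 1) - τ i) / 2 : ℝ)) := by
  have hz (i : ℕ) : Measurable[F (τ i)] fun ω => (σ i ω : ℂ) + θ i * Complex.I :=
    (Complex.measurable_ofReal.comp (hσ i)).add_const _
  have hz_le (i : ℕ) (ω : Ω) : ‖(σ i ω : ℂ) + θ i * Complex.I‖ ≤ C + K :=
    (norm_add_le _ _).trans (add_le_add (by simpa using hC i ω) (by simpa using hK i))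
  have hone := (integrable_expMart_and_integral_eq_one hW hτ hτ₀ hz hz_le n).2
  simp only [← tiltedChar_mul_cexp, integral_mul_const] at hone
  rw [Complex.exp_neg]
  exact eq_inv_of_mul_eq_one_left hone

lemma IsBM.eLpNorm_tiltedChar_le (hW : IsBM μ F W) (hτ : Monotone τ) (hτ₀ : 0 ≤ τ 0)
    (hσ : ∀ i, Measurable[F (τ i)] (σ i)) (hC : ∀ i ω, |σ i ω| ≤ C) (θ : ℕ → ℝ) (n : ℕ) :
    eLpNorm (fun ω => tiltedChar (W · ω) τ (σ · ω) θ n) 2 μ ≤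
      ENNReal.ofReal (Real.exp (C ^ 2 * (τ n - τ 0))) ^ (1 / 2 : ℝ) := by
  have hz (i : ℕ) : Measurable[F (τ i)] fun ω => ((2 * σ i ω : ℝ) : ℂ) :=
    Complex.measurable_ofReal.comp ((hσ i).const_mul 2)
  have hz_le (i : ℕ) (ω : Ω) : ‖((2 * σ i ω : ℝ) : ℂ)‖ ≤ 2 * C := by
    simpa [abs_mul] using hC i ω
  obtain ⟨hint, hone⟩ := integrable_expMart_and_integral_eq_one hW hτ hτ₀ hz hz_le n
  have hnorm : ∫ ω, ‖expMart W τ (fun i ω => (2 * σ i ω : ℝ)) n ω‖ ∂μ = 1 := by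
    simp only [expMart_ofReal, integral_complex_ofReal] at hone
    simpa only [expMart_ofReal, Complex.norm_real, Real.norm_of_nonneg (Real.exp_nonneg _)]
      using Complex.ofReal_injective hone
  have hsq : ∫⁻ ω, ‖tiltedChar (W · ω) τ (σ · ω) θ n‖ₑ ^ 2 ∂μ ≤
      ENNReal.ofReal (Real.exp (C ^ 2 * (τ n - τ 0))) := by
    calc ∫⁻ ω, ‖tiltedChar (W · ω) τ (σ · ω) θ n‖ₑ ^ 2 ∂μ
        ≤ ∫⁻ ω, ENNReal.ofReal (‖expMart W τ (fun i ω => (2 * σ i ω : ℝ)) n ω‖ *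
            Real.exp (C ^ 2 * (τ n - τ 0))) ∂μ := by
          refine lintegral_mono fun ω => ?_
          rw [← ofReal_norm, ← ENNReal.ofReal_pow (norm_nonneg _)]
          exact ENNReal.ofReal_le_ofReal (norm_tiltedChar_sq_le W hτ (hC · ω) θ n)
      _ = ENNReal.ofReal (Real.exp (C ^ 2 * (τ n - τ 0))) := by
          rw [← ofReal_integral_eq_lintegral_ofReal (hint.norm.mul_const _)
            (Eventually.of_forall fun ω => by positivity), integral_mul_const, hnorm, one_mul]
  rw [eLpNorm_eq_lintegral_rpow_enorm_toReal two_ne_zero ENNReal.ofNat_ne_top]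
  simp only [ENNReal.toReal_ofNat, ENNReal.rpow_ofNat]
  gcongr

end TiltedCharacter

/-! ### Paths of the bang-bang equation -/

section BangBangPath

/-- `Y` is a continuous path solving `Y(t) = y - λ ∫₀ᵗ sgn(Y(s)) ds + w(t)`, `t ≥ 0`. -/
structure IsBangBangPath (lam y : ℝ) (w Y : ℝ → ℝ) : Prop where
  continuous : Continuous Y
  eq_sub_add : ∀ t, 0 ≤ t → Y t = y - lam * (∫ s in (0 : ℝ)..t, psgn (Y s)) + w t

variable {lam y s t : ℝ} {w Y : ℝ → ℝ}

lemma intervalIntegrable_psgn_comp (hY : Continuous Y) (a b : ℝ) :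
    IntervalIntegrable (fun s => psgn (Y s)) volume a b :=
  intervalIntegrable_of_abs_le (measurable_psgn.comp hY.measurable)
    (fun _ => (abs_psgn _).le) a b

namespace IsBangBangPath

lemma increment_eq (hY : IsBangBangPath lam y w Y) (hs : 0 ≤ s) (hst : s ≤ t) :
    w t - w s = Y t - Y s + lam * ∫ r in s..t, psgn (Y r) := by
  rw [← intervalIntegral.integral_interval_sub_left (intervalIntegrable_psgn_comp hY.1 0 t)
    (intervalIntegrable_psgn_comp hY.1 0 s), hY.eq_sub_add s hs,
    hY.eq_sub_add t (hs.trans hst)]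
  ring

lemma abs_increment_sub_le (hY : IsBangBangPath lam y w Y) (hs : 0 ≤ s) (hst : s ≤ t) :
    |(Y t - Y s) - (w t - w s)| ≤ |lam| * (t - s) := by
  rw [hY.increment_eq hs hst, sub_add_cancel_left, abs_neg, abs_mul]
  gcongr
  simpa [abs_of_nonneg (sub_nonneg.2 hst)] using
    intervalIntegral.norm_integral_le_of_norm_le_const (a := s) (b := t) (C := 1)
      (f := fun r => psgn (Y r)) fun r _ => (abs_psgn _).le

variable {f f' f'' : ℝ → ℝ}

lemma sum_mul_increment_eq (hY : IsBangBangPath lam y w Y) (f f' f'' : ℝ → ℝ) {τ : ℕ → ℝ}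
    (hτ : Monotone τ) (hτ₀ : 0 ≤ τ 0) (n : ℕ) :
    ∑ i ∈ Finset.range n, f' (Y (τ i)) * (w (τ (i + 1)) - w (τ i)) =
      f (Y (τ n)) - f (Y (τ 0)) -
        (∑ i ∈ Finset.range n, f'' (Y (τ i)) * (τ (i + 1) - τ i)) / 2 +
        lam * ∑ i ∈ Finset.range n, f' (Y (τ i)) * (∫ r in (τ i)..(τ (i + 1)), psgn (Y r)) -
        itoRemainder f f' f'' Y τ n := by
  rw [← Finset.sum_range_sub (fun i => f (Y (τ i))), itoRemainder, Finset.sum_div,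
    Finset.mul_sum, ← Finset.sum_sub_distrib, ← Finset.sum_add_distrib, ← Finset.sum_sub_distrib]
  refine Finset.sum_congr rfl fun i _ => ?_
  rw [hY.increment_eq (hτ₀.trans (hτ i.zero_le)) (hτ i.le_succ)]
  ring

lemma tendsto_sum_mul_increment (hY : IsBangBangPath lam y w Y) (hf : Continuous f)
    (hf' : Continuous f') (hf'' : Continuous f'') (ht : 0 ≤ t) {ns : ℕ → ℕ}
    (hns : Tendsto ns atTop atTop)
    (hrem : Tendsto (fun k => itoRemainder f f' f'' Y (grid t (ns k)) (ns k)) atTop (nhds 0)) :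
    Tendsto (fun k => ∑ i ∈ Finset.range (ns k), f' (Y (grid t (ns k) i)) *
        (w (grid t (ns k) (i + 1)) - w (grid t (ns k) i))) atTop
      (nhds (f (Y t) - f (Y 0) - (∫ r in (0 : ℝ)..t, f'' (Y r)) / 2 +
        lam * ∫ r in (0 : ℝ)..t, f' (Y r) * psgn (Y r))) := by
  have hfY := ((hf.comp hY.1).tendsto t).comp ((tendsto_grid_self t).comp hns)
  have hf''Y := (tendsto_sum_grid_mul_sub (hf''.comp hY.1) ht (fun _ => le_rfl)
    (tendsto_grid_self t)).comp hns
  have hf'Y := (tendsto_sum_grid_mul_integral (hf'.comp hY.1) (intervalIntegrable_psgn_comp hY.1)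
    ht (fun _ => le_rfl) (tendsto_grid_self t)).comp hns
  simp only [hY.sum_mul_increment_eq f f' f'' (monotone_grid ht _) (grid_nonneg ht _ 0),
    grid_succ_sub, grid_zero]
  simpa using ((((hfY.sub_const _).sub (hf''Y.div_const 2)).add (hf'Y.const_mul lam)).sub hrem)

end IsBangBangPath

lemma sum_sum_ite_lt_mul {ι R : Type*} [Fintype ι] [Semiring R] (θ : ι → R) {K : ι → ℕ} {n : ℕ}
    (hK : ∀ j, K j ≤ n) (x : ℕ → R) :
    ∑ i ∈ Finset.range n, (∑ j, if i < K j then θ j else 0) * x i =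
      ∑ j, θ j * ∑ i ∈ Finset.range (K j), x i := by
  simp only [Finset.sum_mul, Finset.mul_sum]
  rw [Finset.sum_comm]
  refine Finset.sum_congr rfl fun j _ => ?_
  simp only [ite_mul, zero_mul]
  rw [← Finset.sum_filter]
  congr 1
  ext i
  simp only [Finset.mem_filter, Finset.mem_range]
  exact ⟨And.right, fun hi => ⟨hi.trans_le (hK j), hi⟩⟩

lemma tendsto_sum_sum_ite_mul_increment {ι : Type*} [Fintype ι] {w g : ℝ → ℝ} (hw : Continuous w)
    (hg : Continuous g) (ht : 0 ≤ t) {s : ι → ℝ} (hs : ∀ j, s j ∈ Icc 0 t) (θ : ι → ℝ) :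
    Tendsto (fun n => ∑ i ∈ Finset.range n, (∑ j, if i < gridIndex t n (s j) then θ j else 0) *
        (w (grid t n (i + 1)) - w (grid t n i) - g (grid t n i) * (t / n))) atTop
      (nhds (∑ j, θ j * (w (s j) - w 0 - ∫ r in (0 : ℝ)..(s j), g r))) := by
  simp only [sum_sum_ite_lt_mul θ fun j => gridIndex_le (hs j) _]
  refine tendsto_finsetSum _ fun j _ => Tendsto.const_mul _ ?_
  have hws := ((hw.tendsto (s j)).comp (tendsto_grid_gridIndex (hs j))).sub_const (w 0)
  have hgs := tendsto_sum_grid_mul_sub hg ht (gridIndex_le (hs j)) (tendsto_grid_gridIndex (hs j))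
  refine (hws.sub hgs).congr fun n => ?_
  rw [Finset.sum_sub_distrib, Finset.sum_range_sub (fun i => w (grid t n i)), grid_zero,
    Function.comp_apply]

end BangBangPath

/-! ### The tilted characters of the bang-bang process -/

section RegularizedTilting

variable {ι : Type*} [Fintype ι]

/-- The step function on the partition `grid t n` which integrates increments of a path to its
linear combination with weights `θ` at the grid points preceding the times `s`. -/
def gridFreq (t : ℝ) (s θ : ι → ℝ) (n i : ℕ) : ℝ := ∑ j, if i < gridIndex t n (s j) then θ j else 0

/-- The logarithm `λ ∫ f'(Y) dw - λ²/2 ∫ f'(Y)² dr` of the Girsanov density with integrand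
`λ f'(Y)`, where `f = smoothAbs ε` and the stochastic integral is written out by Itô's formula. -/
def regLogDensity (lam t ε : ℝ) (Y : ℝ → ℝ) : ℝ :=
  lam * (smoothAbs ε (Y t) - smoothAbs ε (Y 0) - (∫ r in (0 : ℝ)..t, smoothAbsDeriv₂ ε (Y r)) / 2 +
    lam * ∫ r in (0 : ℝ)..t, smoothAbsDeriv ε (Y r) * psgn (Y r)) -
    lam ^ 2 / 2 * ∫ r in (0 : ℝ)..t, smoothAbsDeriv ε (Y r) ^ 2

/-- The limit of `tiltedChar` with integrand `λ f'(Y)`, `f = smoothAbs ε`, along fine grids. -/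
def regTiltedChar (lam t ε : ℝ) (s θ : ι → ℝ) (w Y : ℝ → ℝ) : ℂ :=
  Complex.exp (regLogDensity lam t ε Y +
    (∑ j, θ j * (w (s j) - w 0 - ∫ r in (0 : ℝ)..(s j), lam * smoothAbsDeriv ε (Y r)) : ℝ) *
      Complex.I)

/-- The logarithm of `dℙ/dℙ⋆` when the path is at `x` at time `t` and has local time `l`. -/
def bangBangLogDensity (lam y t x l : ℝ) : ℝ := lam * (|y| - |x| + 2 * l) - lam ^ 2 / 2 * t

variable {lam y t ε : ℝ} {w Y : ℝ → ℝ} {s : ι → ℝ}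

lemma abs_gridFreq_le (t : ℝ) (s θ : ι → ℝ) (n i : ℕ) : |gridFreq t s θ n i| ≤ ∑ j, |θ j| := by
  refine (Finset.abs_sum_le_sum_abs _ _).trans (Finset.sum_le_sum fun j _ => ?_)
  split_ifs <;> simp

lemma tendsto_cexp_add_mul_I {α : Type*} {l : Filter α} {a b : α → ℝ} {a₀ b₀ : ℝ}
    (ha : Tendsto a l (nhds a₀)) (hb : Tendsto b l (nhds b₀)) :
    Tendsto (fun x => Complex.exp (a x + b x * Complex.I)) l
      (nhds (Complex.exp (a₀ + b₀ * Complex.I))) :=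
  (ha.ofReal.add (hb.ofReal.mul_const _)).cexp

lemma IsBangBangPath.tendsto_tiltedChar (hY : IsBangBangPath lam y w Y) (hw : Continuous w)
    (ht : 0 ≤ t) (hs : ∀ j, s j ∈ Icc 0 t) (θ : ι → ℝ) {ns : ℕ → ℕ}
    (hns : Tendsto ns atTop atTop)
    (hrem : Tendsto (fun k => itoRemainder (smoothAbs ε) (smoothAbsDeriv ε) (smoothAbsDeriv₂ ε) Y
      (grid t (ns k)) (ns k)) atTop (nhds 0)) :
    Tendsto (fun k => tiltedChar w (grid t (ns k))
        (fun i => lam * smoothAbsDeriv ε (Y (grid t (ns k) i))) (gridFreq t s θ (ns k)) (ns k))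
      atTop (nhds (regTiltedChar lam t ε s θ w Y)) := by
  have hf'Y : Continuous fun r => smoothAbsDeriv ε (Y r) :=
    (continuous_smoothAbsDeriv ε).comp hY.continuous
  refine tendsto_cexp_add_mul_I ?_ ?_
  · have hsum := hY.tendsto_sum_mul_increment (continuous_smoothAbs ε)
      (continuous_smoothAbsDeriv ε) (continuous_smoothAbsDeriv₂ ε) ht hns hrem
    have hsq := (tendsto_sum_grid_mul_sub (hf'Y.fun_pow 2) ht (fun _ => le_rfl)
      (tendsto_grid_self t)).comp hns
    refine ((hsum.const_mul lam).sub (hsq.const_mul (lam ^ 2 / 2))).congr fun k => ?_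
    simp only [Function.comp_apply, grid_succ_sub, Finset.mul_sum]
    rw [← Finset.sum_sub_distrib]
    exact Finset.sum_congr rfl fun i _ => by ring
  · refine ((tendsto_sum_sum_ite_mul_increment hw (hf'Y.const_mul lam) ht hs θ).comp
      hns).congr fun k => ?_
    simp only [Function.comp_apply, grid_succ_sub, gridFreq]

lemma tendsto_smoothAbs (x : ℝ) :
    Tendsto (fun ε => smoothAbs ε x) (nhdsWithin 0 (Ioi 0)) (nhds |x|) := by
  rw [tendsto_iff_norm_sub_tendsto_zero]
  refine squeeze_zero' (.of_forall fun _ => norm_nonneg _) ?_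
    (tendsto_nhdsWithin_of_tendsto_nhds tendsto_id)
  filter_upwards [self_mem_nhdsWithin] with ε hε using abs_smoothAbs_sub_abs_le hε x

lemma abs_smoothAbsDeriv_mul_psgn_sub_one_le (hε : 0 < ε) (x : ℝ) :
    |smoothAbsDeriv ε x * psgn x - 1| ≤ 2 * if |x| < ε then (1 : ℝ) else 0 := by
  nth_rw 1 [← psgn_mul_self x]
  rw [← sub_mul, abs_mul, abs_psgn, mul_one]
  exact abs_smoothAbsDeriv_sub_psgn_le hε x

lemma abs_smoothAbsDeriv_sq_sub_one_le (hε : 0 < ε) (x : ℝ) :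
    |smoothAbsDeriv ε x ^ 2 - 1| ≤ 1 * if |x| < ε then (1 : ℝ) else 0 := by
  split_ifs with hx
  · have := (sq_le_one_iff_abs_le_one _).2 (abs_smoothAbsDeriv_le_one hε x)
    rw [abs_le]
    constructor <;> nlinarith [sq_nonneg (smoothAbsDeriv ε x)]
  · rw [smoothAbsDeriv_eq_psgn hε (not_lt.1 hx), sq, psgn_mul_self]
    simp

lemma HasLocalTimeAt.tendsto_regLogDensity {l : ℝ} (hl : HasLocalTimeAt Y t l)
    (hY : Continuous Y) (ht : 0 ≤ t) (lam : ℝ) :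
    Tendsto (fun ε => regLogDensity lam t ε Y) (nhdsWithin 0 (Ioi 0))
      (nhds (-bangBangLogDensity lam (Y 0) t (Y t) l)) := by
  have hcross := hl.tendsto_integral_comp hY ht (G := fun ε x => smoothAbsDeriv ε x * psgn x)
    (fun ε => (continuous_smoothAbsDeriv ε).measurable.mul measurable_psgn) measurable_const
    (fun _ => abs_one.le) (fun ε hε => abs_smoothAbsDeriv_mul_psgn_sub_one_le hε)
  have hsq := hl.tendsto_integral_comp hY ht (G := fun ε x => smoothAbsDeriv ε x ^ 2)
    (fun ε => (continuous_smoothAbsDeriv ε).measurable.pow_const 2) measurable_const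
    (fun _ => abs_one.le) (fun ε hε => abs_smoothAbsDeriv_sq_sub_one_le hε)
  have hlim := (((((tendsto_smoothAbs (Y t)).sub (tendsto_smoothAbs (Y 0))).sub
    ((hl.tendsto_integral_smoothAbsDeriv₂ hY ht).div_const 2)).add
    (hcross.const_mul lam)).const_mul lam).sub (hsq.const_mul (lam ^ 2 / 2))
  unfold regLogDensity
  convert hlim using 2
  rw [bangBangLogDensity, intervalIntegral.integral_const, smul_eq_mul]
  ring

lemma IsBangBangPath.tendsto_regTiltedChar (hY : IsBangBangPath lam y w Y) (hw₀ : w 0 = 0)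
    (ht : 0 ≤ t) (hs : ∀ j, 0 ≤ s j) (θ : ι → ℝ) {L : ℝ → ℝ}
    (hL : ∀ r, 0 ≤ r → HasLocalTimeAt Y r (L r)) :
    Tendsto (fun ε => regTiltedChar lam t ε s θ w Y) (nhdsWithin 0 (Ioi 0))
      (nhds (Complex.exp (((-bangBangLogDensity lam y t (Y t) (L t) : ℝ) : ℂ) +
        (∑ j, θ j * (Y (s j) - y) : ℝ) * Complex.I))) := by
  have hY₀ : Y 0 = y := by simpa [hw₀] using hY.eq_sub_add 0 le_rfl
  refine tendsto_cexp_add_mul_I (hY₀ ▸ (hL t ht).tendsto_regLogDensity hY.continuous ht lam)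
    (tendsto_finsetSum _ fun j _ => Tendsto.const_mul _ ?_)
  have hdrift := (hL _ (hs j)).tendsto_integral_comp hY.continuous (hs j) (G := smoothAbsDeriv)
    (fun ε => (continuous_smoothAbsDeriv ε).measurable) measurable_psgn
    (fun x => (abs_psgn x).le) (fun ε hε => abs_smoothAbsDeriv_sub_psgn_le hε)
  have hYs : Y (s j) - y = w (s j) - w 0 - lam * ∫ r in (0 : ℝ)..(s j), psgn (Y r) := by
    rw [hY.eq_sub_add _ (hs j), hw₀]; ring
  simpa only [hYs, intervalIntegral.integral_const_mul] using
    (hdrift.const_mul lam).const_sub (w (s j) - w 0)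

end RegularizedTilting

section TiltedCharacterIntegral

/-- `Y` solves `dY = -λ sgn(Y) dt + dW`, `Y(0) = y`, for the `F`-Brownian motion `W` under `P`. -/
structure IsBangBangSolution (P : Measure Ω) (F : ℝ → MeasurableSpace Ω) (lam y : ℝ)
    (W Y : ℝ → Ω → ℝ) : Prop where
  isBM : IsBM P F W
  measurable_adapted : ∀ t, 0 ≤ t → Measurable[F t] (Y t)
  ae_isBangBangPath : ∀ᵐ ω ∂P, IsBangBangPath lam y (W · ω) (Y · ω)

variable {Ω' : Type*} [MeasurableSpace Ω'] {P : Measure Ω} {Q : Measure Ω'}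
  {F : ℝ → MeasurableSpace Ω}
  {G : ℝ → MeasurableSpace Ω'} {W Y L : ℝ → Ω → ℝ} {B : ℝ → Ω' → ℝ} {lam y t ε : ℝ}
  {ι : Type*} [Fintype ι] {s : ι → ℝ}

lemma abs_mul_smoothAbsDeriv_le (lam : ℝ) (hε : 0 < ε) (x : ℝ) :
    |lam * smoothAbsDeriv ε x| ≤ |lam| := by
  rw [abs_mul]
  exact mul_le_of_le_one_right (abs_nonneg _) (abs_smoothAbsDeriv_le_one hε x)

lemma IsBM.tendsto_cexp_neg_sum_gridFreq_sq [IsProbabilityMeasure Q] (hB : IsBM Q G B) (ht : 0 ≤ t)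
    (hs : ∀ j, s j ∈ Icc 0 t) (θ : ι → ℝ) :
    Tendsto (fun n => Complex.exp (-(∑ i ∈ Finset.range n,
        gridFreq t s θ n i ^ 2 * (grid t n (i + 1) - grid t n i) / 2 : ℝ))) atTop
      (nhds (∫ ω, Complex.exp ((∑ j, θ j * B (s j) ω : ℝ) * Complex.I) ∂Q)) := by
  simp only [← hB.integral_tiltedChar (monotone_grid ht _) (grid_nonneg ht _ 0) (σ := 0)
    (fun _ => measurable_const) (C := 0) (by simp) (abs_gridFreq_le t s θ _)]
  refine tendsto_integral_of_dominated_convergence (fun _ => 1)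
    (fun n => (hB.measurable_tiltedChar (monotone_grid ht n) (grid_nonneg ht n 0)
      (fun _ => measurable_const) n).aestronglyMeasurable)
    (integrable_const _) (fun n => .of_forall fun ω => by simp [norm_tiltedChar]) ?_
  filter_upwards [hB.cont, hB.init] with ω hcont hinit
  have hphase := tendsto_sum_sum_ite_mul_increment hcont continuous_const ht hs θ (g := fun _ => 0)
  simpa [tiltedChar, gridFreq, hinit] using tendsto_cexp_add_mul_I
    (tendsto_const_nhds (x := (0 : ℝ))) hphase

namespace IsBangBangSolution

lemma measurable_drift (hY : IsBangBangSolution P F lam y W Y) (ε : ℝ) {r : ℝ} (hr : 0 ≤ r) :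
    Measurable[F r] fun ω => lam * smoothAbsDeriv ε (Y r ω) :=
  ((continuous_smoothAbsDeriv ε).measurable.comp (hY.measurable_adapted r hr)).const_mul lam

lemma aestronglyMeasurable_tiltedChar_grid (hY : IsBangBangSolution P F lam y W Y) (ε : ℝ)
    (ht : 0 ≤ t) (θ : ℕ → ℝ) (n : ℕ) :
    AEStronglyMeasurable (fun ω => tiltedChar (W · ω) (grid t n)
      (fun i => lam * smoothAbsDeriv ε (Y (grid t n i) ω)) θ n) P :=
  (hY.isBM.measurable_tiltedChar (monotone_grid ht n) (grid_nonneg ht n 0)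
    (fun i => (hY.measurable_drift ε (grid_nonneg ht n i)).mono (hY.isBM.le _) le_rfl)
    n).aestronglyMeasurable

lemma ae_tendsto_regTiltedChar (hY : IsBangBangSolution P F lam y W Y) (hL : IsLocalTime P Y L)
    (ht : 0 ≤ t) (hs : ∀ j, s j ∈ Icc 0 t) (θ : ι → ℝ) :
    ∀ᵐ ω ∂P, Tendsto (fun ε => regTiltedChar lam t ε s θ (W · ω) (Y · ω))
      (nhdsWithin 0 (Ioi 0))
      (nhds (Complex.exp (((-bangBangLogDensity lam y t (Y t ω) (L t ω) : ℝ) : ℂ) +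
        (∑ j, θ j * (Y (s j) ω - y) : ℝ) * Complex.I))) := by
  filter_upwards [hY.ae_isBangBangPath, hY.isBM.init, hL] with ω hpath hinit hlocal
  exact hpath.tendsto_regTiltedChar hinit ht (fun j => (hs j).1) θ hlocal

variable [IsProbabilityMeasure P] [IsProbabilityMeasure Q]

lemma exists_subseq_tendsto_tiltedChar (hY : IsBangBangSolution P F lam y W Y) (hε : 0 < ε)
    (ht : 0 ≤ t) (hs : ∀ j, s j ∈ Icc 0 t) (θ : ι → ℝ) :
    ∃ ns : ℕ → ℕ, StrictMono ns ∧ ∀ᵐ ω ∂P,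
      Tendsto (fun k => tiltedChar (W · ω) (grid t (ns k))
          (fun i => lam * smoothAbsDeriv ε (Y (grid t (ns k) i) ω)) (gridFreq t s θ (ns k)) (ns k))
        atTop (nhds (regTiltedChar lam t ε s θ (W · ω) (Y · ω))) := by
  obtain ⟨ns, hns, hrem⟩ := exists_subseq_tendsto_itoRemainder_zero hY.isBM hY.measurable_adapted
    (hY.ae_isBangBangPath.mono fun ω h r s hr hrs => h.abs_increment_sub_le hr hrs)
    (fun x d => (smoothAbs_taylor ε x d).trans_eq (div_eq_inv_mul _ _))
    (continuous_smoothAbsDeriv₂ ε).measurable (abs_smoothAbsDeriv₂_le hε) ht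
  refine ⟨ns, hns, ?_⟩
  filter_upwards [hY.ae_isBangBangPath, hY.isBM.cont, hrem] with ω hpath hcont hremω
  exact hpath.tendsto_tiltedChar hcont ht hs θ hns.tendsto_atTop hremω

lemma eLpNorm_tiltedChar_grid_le (hY : IsBangBangSolution P F lam y W Y) (hε : 0 < ε)
    (ht : 0 ≤ t) (θ : ℕ → ℝ) (n : ℕ) :
    eLpNorm (fun ω => tiltedChar (W · ω) (grid t n)
        (fun i => lam * smoothAbsDeriv ε (Y (grid t n i) ω)) θ n) 2 P ≤
      ENNReal.ofReal (Real.exp (lam ^ 2 * t)) ^ (1 / 2 : ℝ) := by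
  refine (hY.isBM.eLpNorm_tiltedChar_le (monotone_grid ht n) (grid_nonneg ht n 0)
    (fun i => hY.measurable_drift ε (grid_nonneg ht n i))
    (fun _ _ => abs_mul_smoothAbsDeriv_le lam hε _) θ n).trans ?_
  rw [sq_abs, grid_zero, sub_zero]
  have := grid_le ht (le_refl n)
  gcongr

lemma integral_tiltedChar_grid (hY : IsBangBangSolution P F lam y W Y) (hε : 0 < ε) (ht : 0 ≤ t)
    (s θ : ι → ℝ) (n : ℕ) :
    ∫ ω, tiltedChar (W · ω) (grid t n) (fun i => lam * smoothAbsDeriv ε (Y (grid t n i) ω))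
        (gridFreq t s θ n) n ∂P =
      Complex.exp (-(∑ i ∈ Finset.range n,
        gridFreq t s θ n i ^ 2 * (grid t n (i + 1) - grid t n i) / 2 : ℝ)) :=
  hY.isBM.integral_tiltedChar (monotone_grid ht n) (grid_nonneg ht n 0)
    (fun i => hY.measurable_drift ε (grid_nonneg ht n i))
    (fun _ _ => abs_mul_smoothAbsDeriv_le lam hε _) (abs_gridFreq_le t s θ n) n

lemma aestronglyMeasurable_regTiltedChar (hY : IsBangBangSolution P F lam y W Y) (hε : 0 < ε)
    (ht : 0 ≤ t) (hs : ∀ j, s j ∈ Icc 0 t) (θ : ι → ℝ) :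
    AEStronglyMeasurable (fun ω => regTiltedChar lam t ε s θ (W · ω) (Y · ω)) P := by
  obtain ⟨ns, -, hlim⟩ := hY.exists_subseq_tendsto_tiltedChar hε ht hs θ
  exact aestronglyMeasurable_of_tendsto_ae atTop
    (fun k => hY.aestronglyMeasurable_tiltedChar_grid ε ht _ (ns k)) hlim

lemma eLpNorm_regTiltedChar_le (hY : IsBangBangSolution P F lam y W Y) (hε : 0 < ε)
    (ht : 0 ≤ t) (hs : ∀ j, s j ∈ Icc 0 t) (θ : ι → ℝ) :
    eLpNorm (fun ω => regTiltedChar lam t ε s θ (W · ω) (Y · ω)) 2 P ≤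
      ENNReal.ofReal (Real.exp (lam ^ 2 * t)) ^ (1 / 2 : ℝ) := by
  obtain ⟨ns, -, hlim⟩ := hY.exists_subseq_tendsto_tiltedChar hε ht hs θ
  exact Lp.eLpNorm_le_of_ae_tendsto (.of_forall fun k => hY.eLpNorm_tiltedChar_grid_le hε ht _ _)
    (fun k => hY.aestronglyMeasurable_tiltedChar_grid ε ht _ (ns k)) hlim

lemma integral_regTiltedChar (hY : IsBangBangSolution P F lam y W Y) (hB : IsBM Q G B)
    (hε : 0 < ε) (ht : 0 ≤ t) (hs : ∀ j, s j ∈ Icc 0 t) (θ : ι → ℝ) :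
    ∫ ω, regTiltedChar lam t ε s θ (W · ω) (Y · ω) ∂P =
      ∫ ω, Complex.exp ((∑ j, θ j * B (s j) ω : ℝ) * Complex.I) ∂Q := by
  obtain ⟨ns, hns, hlim⟩ := hY.exists_subseq_tendsto_tiltedChar hε ht hs θ
  have hint := tendsto_integral_of_eLpNorm_le ENNReal.one_lt_two
    (fun k => hY.aestronglyMeasurable_tiltedChar_grid ε ht _ (ns k)) (by simp)
    (fun k => hY.eLpNorm_tiltedChar_grid_le hε ht _ (ns k)) hlim
  simp only [hY.integral_tiltedChar_grid hε ht s θ] at hint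
  exact tendsto_nhds_unique hint
    ((hB.tendsto_cexp_neg_sum_gridFreq_sq ht hs θ).comp hns.tendsto_atTop)

lemma memLp_cexp_neg_bangBangLogDensity (hY : IsBangBangSolution P F lam y W Y)
    (hL : IsLocalTime P Y L) (ht : 0 ≤ t) (hs : ∀ j, s j ∈ Icc 0 t) (θ : ι → ℝ) :
    MemLp (fun ω => Complex.exp (((-bangBangLogDensity lam y t (Y t ω) (L t ω) : ℝ) : ℂ) +
      (∑ j, θ j * (Y (s j) ω - y) : ℝ) * Complex.I)) 2 P := by
  obtain ⟨ε, -, hε, hε₀⟩ := exists_seq_strictAnti_tendsto_nhdsWithin (0 : ℝ)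
  have hlim := (hY.ae_tendsto_regTiltedChar hL ht hs θ).mono fun ω hω => hω.comp hε₀
  have hmeas k := hY.aestronglyMeasurable_regTiltedChar (hε k) ht hs θ
  refine ⟨aestronglyMeasurable_of_tendsto_ae atTop hmeas hlim, ?_⟩
  refine (Lp.eLpNorm_le_of_ae_tendsto
    (.of_forall fun k => hY.eLpNorm_regTiltedChar_le (hε k) ht hs θ) hmeas hlim).trans_lt ?_
  exact ENNReal.rpow_lt_top_of_nonneg (by norm_num) ENNReal.ofReal_ne_top

lemma integral_cexp_neg_bangBangLogDensity (hY : IsBangBangSolution P F lam y W Y)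
    (hB : IsBM Q G B) (hL : IsLocalTime P Y L) (ht : 0 ≤ t) (hs : ∀ j, s j ∈ Icc 0 t)
    (θ : ι → ℝ) :
    ∫ ω, Complex.exp (((-bangBangLogDensity lam y t (Y t ω) (L t ω) : ℝ) : ℂ) +
        (∑ j, θ j * (Y (s j) ω - y) : ℝ) * Complex.I) ∂P =
      ∫ ω, Complex.exp ((∑ j, θ j * B (s j) ω : ℝ) * Complex.I) ∂Q := by
  obtain ⟨ε, -, hε, hε₀⟩ := exists_seq_strictAnti_tendsto_nhdsWithin (0 : ℝ)
  have hint := tendsto_integral_of_eLpNorm_le ENNReal.one_lt_two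
    (fun k => hY.aestronglyMeasurable_regTiltedChar (hε k) ht hs θ) (by simp)
    (fun k => hY.eLpNorm_regTiltedChar_le (hε k) ht hs θ)
    ((hY.ae_tendsto_regTiltedChar hL ht hs θ).mono fun ω hω => hω.comp hε₀)
  simp only [hY.integral_regTiltedChar hB (hε _) ht hs θ] at hint
  exact tendsto_nhds_unique hint tendsto_const_nhds

lemma integrable_exp_neg_bangBangLogDensity (hY : IsBangBangSolution P F lam y W Y)
    (hL : IsLocalTime P Y L) (ht : 0 ≤ t) :
    Integrable (fun ω => Real.exp (-bangBangLogDensity lam y t (Y t ω) (L t ω))) P := by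
  have hmem := hY.memLp_cexp_neg_bangBangLogDensity hL ht (s := Fin.elim0) (fun j => j.elim0) 0
  refine (hmem.integrable one_le_two).norm.congr (.of_forall fun ω => ?_)
  simp [Complex.norm_exp]

end IsBangBangSolution

end TiltedCharacterIntegral

/-! ### The σ-algebra generated by a process and its characters -/

section NaturalFiltration

variable {Ω : Type*} {Y : ℝ → Ω → ℝ} {t : ℝ}

lemma measurable_natSA {E : Type*} [MeasurableSpace E] (Y : ℝ → Ω → E) {s : ℝ}
    (hs : s ∈ Icc 0 t) : Measurable[natSA Y t] (Y s) :=
  measurable_iff_comap_le.2 (le_iSup₂ (f := fun s (_ : s ∈ Icc (0 : ℝ) t) =>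
    MeasurableSpace.comap (Y s) inferInstance) s hs)

lemma natSA_eq_comap {E : Type*} [MeasurableSpace E] (Y : ℝ → Ω → E) (t : ℝ) :
    natSA Y t = MeasurableSpace.comap (fun ω (s : Icc (0 : ℝ) t) => Y s ω) MeasurableSpace.pi := by
  simp only [natSA, MeasurableSpace.pi, MeasurableSpace.comap_iSup, MeasurableSpace.comap_comp,
    iSup_subtype, Function.comp_def]

lemma natSA_le_natSA_sub_const (Y : ℝ → Ω → ℝ) (t c : ℝ) :
    natSA Y t ≤ natSA (fun s ω => Y s ω - c) t :=
  iSup₂_le fun s hs => measurable_iff_comap_le.1 <| by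
    simpa using (measurable_natSA (fun s ω => Y s ω - c) hs).add_const c

/-- The local time of a path `Y` as a measurable function of its values on `[0, t]`: the limit of
Riemann sums for `¼ ∫₀ᵗ f''(Y(s)) ds` with `f = smoothAbs ε`, as `ε` runs through `1 / (k + 1)`. -/
def riemannLocalTime (Y : ℝ → ℝ) (t : ℝ) : ℝ :=
  limsup (fun k : ℕ => limsup (fun n : ℕ => ∑ i ∈ Finset.range n,
    smoothAbsDeriv₂ (1 / (k + 1)) (Y (grid t n i)) * (t / n)) atTop) atTop / 4

lemma measurable_riemannLocalTime (Y : ℝ → Ω → ℝ) (ht : 0 ≤ t) :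
    Measurable[natSA Y t] fun ω => riemannLocalTime (Y · ω) t := by
  refine Measurable.div_const (Measurable.limsup fun k => Measurable.limsup fun n =>
    Finset.measurable_sum _ fun i hi => Measurable.mul_const ?_ _) 4
  exact (continuous_smoothAbsDeriv₂ _).measurable.comp
    (measurable_natSA Y ⟨grid_nonneg ht n i, grid_le ht (Finset.mem_range.1 hi).le⟩)

lemma HasLocalTimeAt.riemannLocalTime_eq {Y : ℝ → ℝ} {L : ℝ} (hL : HasLocalTimeAt Y t L)
    (hY : Continuous Y) (ht : 0 ≤ t) : riemannLocalTime Y t = L := by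
  have hinner (k : ℕ) : limsup (fun n : ℕ => ∑ i ∈ Finset.range n,
      smoothAbsDeriv₂ (1 / (k + 1)) (Y (grid t n i)) * (t / n)) atTop =
        ∫ s in (0 : ℝ)..t, smoothAbsDeriv₂ (1 / (k + 1)) (Y s) :=
    (tendsto_sum_grid_mul_sub ((continuous_smoothAbsDeriv₂ _).comp hY) ht (fun _ => le_rfl)
      (tendsto_grid_self t)).limsup_eq
  have hε : Tendsto (fun k : ℕ => 1 / ((k : ℝ) + 1)) atTop (nhdsWithin 0 (Ioi 0)) :=
    tendsto_nhdsWithin_iff.2 ⟨tendsto_one_div_add_atTop_nhds_zero_nat,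
      .of_forall fun _ => mem_Ioi.2 Nat.one_div_pos_of_nat⟩
  have houter := ((hL.tendsto_integral_smoothAbsDeriv₂ hY ht).comp hε).limsup_eq
  simp only [Function.comp_def] at houter
  rw [riemannLocalTime]
  simp only [hinner]
  rw [houter, mul_div_cancel_left₀ _ four_ne_zero]

end NaturalFiltration

section CharacteristicFunctions

variable {μ ν : Measure Ω} [IsFiniteMeasure μ] [IsFiniteMeasure ν]

lemma map_pi_eq_of_integral_cexp_eq {ι : Type*} [Fintype ι] {X : Ω → ι → ℝ} (hX : Measurable X)
    (h : ∀ θ : ι → ℝ, ∫ ω, Complex.exp ((∑ j, θ j * X ω j : ℝ) * Complex.I) ∂μ =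
      ∫ ω, Complex.exp ((∑ j, θ j * X ω j : ℝ) * Complex.I) ∂ν) :
    μ.map X = ν.map X := by
  classical
  refine Measure.ext_of_charFunDual (funext fun Λ => ?_)
  have hcont : Continuous fun v : ι → ℝ => Complex.exp ((Λ v : ℂ) * Complex.I) := by fun_prop
  have hΛ (v : ι → ℝ) : Λ v = ∑ j, Λ (fun i => if j = i then 1 else 0) * v j := by
    simpa [mul_comm] using LinearMap.pi_apply_eq_sum_univ (Λ : (ι → ℝ) →ₗ[ℝ] ℝ) v
  rw [charFunDual_apply, charFunDual_apply,
    integral_map hX.aemeasurable hcont.aestronglyMeasurable,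
    integral_map hX.aemeasurable hcont.aestronglyMeasurable]
  simpa only [← hΛ] using h fun j => Λ fun i => if j = i then 1 else 0

lemma map_eq_of_integral_cexp_eq {T : Type*} {X : Ω → T → ℝ} (hX : Measurable X)
    (h : ∀ (I : Finset T) (θ : I → ℝ),
      ∫ ω, Complex.exp ((∑ j, θ j * X ω j : ℝ) * Complex.I) ∂μ =
        ∫ ω, Complex.exp ((∑ j, θ j * X ω j : ℝ) * Complex.I) ∂ν) :
    μ.map X = ν.map X := by
  refine IsProjectiveLimit.unique (P := fun I => (ν.map X).map I.restrict) (fun I => ?_)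
    fun I => rfl
  have hrestrict : Measurable (I.restrict : (T → ℝ) → I → ℝ) := Finset.measurable_restrict I
  simp only [Measure.map_map hrestrict hX]
  exact map_pi_eq_of_integral_cexp_eq (hrestrict.comp hX) (h I)

lemma measure_natSA_eq_of_integral_cexp_eq {Y : ℝ → Ω → ℝ} {t : ℝ} (hle : natSA Y t ≤ m)
    (h : ∀ (I : Finset (Icc 0 t)) (θ : I → ℝ),
      ∫ ω, Complex.exp ((∑ j, θ j * Y j ω : ℝ) * Complex.I) ∂μ =
        ∫ ω, Complex.exp ((∑ j, θ j * Y j ω : ℝ) * Complex.I) ∂ν)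
    {A : Set Ω} (hA : MeasurableSet[natSA Y t] A) : μ A = ν A := by
  have hX : Measurable fun ω (s : Icc 0 t) => Y s ω :=
    measurable_pi_lambda _ fun s => (measurable_natSA Y s.2).mono hle le_rfl
  rw [natSA_eq_comap] at hA
  obtain ⟨S, hS, rfl⟩ := hA
  rw [← Measure.map_apply hX hS, ← Measure.map_apply hX hS, map_eq_of_integral_cexp_eq hX h]

end CharacteristicFunctions

/-! ### The density on the σ-algebra generated by the bang-bang process -/

section Density

lemma measure_eq_setLIntegral_inv_of_withDensity_eq {P Q : Measure Ω}
    {m' : MeasurableSpace Ω} (hle : m' ≤ m) {f : Ω → ENNReal} (hf : Measurable[m'] f)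
    (hf₀ : ∀ ω, f ω ≠ 0) (hf_top : ∀ ω, f ω ≠ ⊤)
    (hPQ : ∀ A, MeasurableSet[m'] A → P.withDensity f A = Q A)
    {A : Set Ω} (hA : MeasurableSet[m'] A) : P A = ∫⁻ ω in A, (f ω)⁻¹ ∂Q := by
  have htrim : Q.trim hle = (P.withDensity f).trim hle := @Measure.ext _ m' _ _ fun S hS => by
    rw [trim_measurableSet_eq hle hS, trim_measurableSet_eq hle hS, hPQ S hS]
  have hind : Measurable[m'] (A.indicator fun ω => (f ω)⁻¹) := hf.inv.indicator hA
  have hcancel : f * A.indicator (fun ω => (f ω)⁻¹) = A.indicator 1 := funext fun ω => by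
    by_cases hω : ω ∈ A <;> simp [hω, ENNReal.mul_inv_cancel (hf₀ ω) (hf_top ω)]
  rw [← lintegral_indicator (hle A hA), ← lintegral_trim hle hind, htrim, lintegral_trim hle hind,
    lintegral_withDensity_eq_lintegral_mul _ (hf.mono hle le_rfl) (hind.mono hle le_rfl), hcancel,
    lintegral_indicator_one (hle A hA)]

lemma IsLocalTime.ae_riemannLocalTime_eq {μ : Measure Ω} {Y L : ℝ → Ω → ℝ} {t : ℝ}
    (hL : IsLocalTime μ Y L) (hY : ∀ᵐ ω ∂μ, Continuous (Y · ω)) (ht : 0 ≤ t) :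
    ∀ᵐ ω ∂μ, riemannLocalTime (Y · ω) t = L t ω := by
  filter_upwards [hL, hY] with ω hLω hYω
  exact HasLocalTimeAt.riemannLocalTime_eq (hLω t ht) hYω ht

lemma measurable_bangBangLogDensity_riemannLocalTime (lam y : ℝ) {t : ℝ} {Ω : Type*}
    (Y : ℝ → Ω → ℝ) (ht : 0 ≤ t) :
    Measurable[natSA Y t] fun ω =>
      bangBangLogDensity lam y t (Y t ω) (riemannLocalTime (Y · ω) t) := by
  have hYt : Measurable[natSA Y t] (Y t) := measurable_natSA Y ⟨ht, le_rfl⟩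
  have hL := measurable_riemannLocalTime Y ht
  unfold bangBangLogDensity
  exact ((((measurable_abs.comp hYt).const_sub |y|).add (hL.const_mul 2)).const_mul lam).sub_const _

lemma IsBangBangSolution.withDensity_natSA_eq {P Q : Measure Ω} [IsProbabilityMeasure P]
    [IsProbabilityMeasure Q] {F : ℝ → MeasurableSpace Ω} {lam y t : ℝ} {W Y L : ℝ → Ω → ℝ}
    (hY : IsBangBangSolution P F lam y W Y) (hB : IsBM Q (natSA Y) (fun t ω => Y t ω - y))
    (hL : IsLocalTime P Y L) (ht : 0 ≤ t) {D : Ω → ℝ} (hD : Measurable D)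
    (hDL : ∀ᵐ ω ∂P, D ω = bangBangLogDensity lam y t (Y t ω) (L t ω))
    {A : Set Ω} (hA : MeasurableSet[natSA Y t] A) :
    P.withDensity (fun ω => ENNReal.ofReal (Real.exp (-D ω))) A = Q A := by
  have hint : Integrable (fun ω => Real.exp (-D ω)) P :=
    (hY.integrable_exp_neg_bangBangLogDensity hL ht).congr (hDL.mono fun ω hω => by simp only [hω])
  have := isFiniteMeasure_withDensity_ofReal hint.2
  have hmeas (s : ℝ) (hs : s ∈ Icc 0 t) : Measurable fun ω => Y s ω - y :=
    ((measurable_natSA Y hs).mono (hB.le t) le_rfl).sub_const y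
  refine measure_natSA_eq_of_integral_cexp_eq
    (iSup₂_le fun s hs => measurable_iff_comap_le.1 (hmeas s hs)) (fun I θ => ?_)
    (natSA_le_natSA_sub_const Y t y A hA)
  rw [← hY.integral_cexp_neg_bangBangLogDensity hB hL ht (fun j => j.1.2) θ,
    integral_withDensity_eq_integral_toReal_smul (by fun_prop) (by simp)]
  refine integral_congr_ae (hDL.mono fun ω hω => ?_)
  simp only [ENNReal.toReal_ofReal (Real.exp_pos _).le, hω, Complex.real_smul, Complex.exp_add,
    Complex.ofReal_exp]

end Density

theorem girsanov_density_bangbang_general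
    (lam y : ℝ) {Ω : Type*} [mΩ : MeasurableSpace Ω] (P Pstar : Measure Ω)
    [IsProbabilityMeasure P] [IsProbabilityMeasure Pstar]
    (F : ℝ → MeasurableSpace Ω) (W Y L : ℝ → Ω → ℝ)
    (hW : IsBM P F W)
    (hYadp : ∀ t : ℝ, 0 ≤ t → MeasurableSpace.comap (Y t) inferInstance ≤ F t)
    (hYcont : ∀ᵐ ω ∂P, Continuous fun t => Y t ω)
    (hYeq : ∀ᵐ ω ∂P, ∀ t : ℝ, 0 ≤ t →
      Y t ω = y - lam * (∫ s in (0:ℝ)..t, psgn (Y s ω)) + W t ω)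
    (hstar : IsBM Pstar (fun t => natSA Y t) (fun t ω => Y t ω - y))
    (hLP : IsLocalTime P Y L) (hLstar : IsLocalTime Pstar Y L) :
    ∀ t : ℝ, 0 ≤ t → ∀ A : Set Ω, MeasurableSet[natSA Y t] A →
      P A = ∫⁻ ω in A,
        ENNReal.ofReal
          (Real.exp (lam * (|y| - |Y t ω| + 2 * L t ω) - lam ^ 2 / 2 * t)) ∂Pstar := by
  intro t ht A hA
  have hY : IsBangBangSolution P F lam y W Y :=
    ⟨hW, fun s hs => measurable_iff_comap_le.2 (hYadp s hs), hYcont.and hYeq |>.mono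
      fun _ h => ⟨h.1, h.2⟩⟩
  have hcont : ∀ᵐ ω ∂Pstar, Continuous (Y · ω) :=
    hstar.cont.mono fun ω h => by simpa using h.add_const y
  have hD := measurable_bangBangLogDensity_riemannLocalTime lam y Y ht
  have hDL : ∀ᵐ ω ∂P, bangBangLogDensity lam y t (Y t ω) (riemannLocalTime (Y · ω) t) =
      bangBangLogDensity lam y t (Y t ω) (L t ω) :=
    (hLP.ae_riemannLocalTime_eq hYcont ht).mono fun ω hω => by rw [hω]
  rw [measure_eq_setLIntegral_inv_of_withDensity_eq (hstar.le t) hD.neg.exp.ennreal_ofReal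
    (by simp [Real.exp_pos]) (by simp)
    (fun _ => hY.withDensity_natSA_eq hstar hLP ht (hD.mono (hstar.le t) le_rfl) hDL) hA]
  refine lintegral_congr_ae (ae_restrict_of_ae ?_)
  filter_upwards [hLstar.ae_riemannLocalTime_eq hcont ht] with ω hω
  rw [Pi.neg_apply, hω, ← ENNReal.ofReal_inv_of_pos (Real.exp_pos _), ← Real.exp_neg, neg_neg,
    bangBangLogDensity]

/-- (5.1) of the paper. If `Y` solves
`Y(t) = y − λ∫₀ᵗ sgn(Y(s)) ds + W(t)` under `ℙ`, and `ℙ⋆` is the reference probability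
measure under which `Y` is a standard Brownian motion started at `y`, then for every
`t ≥ 0` the Radon–Nikodým derivative of `ℙ` with respect to `ℙ⋆` on `𝔉^Y(t)` is
`exp{ λ(|y| − |Y(t)| + 2L^Y(t)) − λ²t/2 }`. -/
theorem girsanov_density_bangbang
    (lam y : ℝ) (hlam : 0 < lam)
    {Ω : Type*} [mΩ : MeasurableSpace Ω] (P Pstar : Measure Ω)
    [IsProbabilityMeasure P] [IsProbabilityMeasure Pstar]
    (F : ℝ → MeasurableSpace Ω) (W Y L : ℝ → Ω → ℝ)
    (hW : IsBM P F W)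
    (hYadp : ∀ t : ℝ, 0 ≤ t → MeasurableSpace.comap (Y t) inferInstance ≤ F t)
    (hYcont : ∀ᵐ ω ∂P, Continuous fun t => Y t ω)
    (hYeq : ∀ᵐ ω ∂P, ∀ t : ℝ, 0 ≤ t →
      Y t ω = y - lam * (∫ s in (0:ℝ)..t, psgn (Y s ω)) + W t ω)
    (hstar : IsBM Pstar (fun t => natSA Y t) (fun t ω => Y t ω - y))
    (hLP : IsLocalTime P Y L) (hLstar : IsLocalTime Pstar Y L) :
    ∀ t : ℝ, 0 ≤ t → ∀ A : Set Ω, MeasurableSet[natSA Y t] A →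
      P A = ∫⁻ ω in A,
        ENNReal.ofReal
          (Real.exp (lam * (|y| - |Y t ω| + 2 * L t ω) - lam ^ 2 / 2 * t)) ∂Pstar := by
  exact girsanov_density_bangbang_general lam y P Pstar F W Y L hW hYadp hYcont hYeq hstar hLP
    hLstar

end SDEPaper
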